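/- arXiv:2103.13521 — 4 statements merged into one kernel-verified Lean document; each statement's English description precedes it below -/
import Mathlib

section
/- If a probability distribution P over variables (X_v)_{v∈V} is V-stable, then P satisfies the DAG-uniqueness property: any two DAGs with skeleton sk(P), w.r.t. each of which P satisfies ordered upward- and downward-stability, are Markov equivalent. -/
set_option linter.unusedSectionVars false
set_option linter.unusedVariables false

open MeasureTheory ProbabilityTheory

/-! ## Mixed graphs, m-separation, and related graphical notions -/

/-- A mixed graph with arrows (`i → j`) and bidirected arcs (`i ↔ j`). -/
structure MixedGraph (V : Type) where
  arrow : V → V → Prop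
  arc : V → V → Prop

namespace MixedGraph

variable {V : Type} (G : MixedGraph V)

/-- `G.anc i j` : `i` is an ancestor of `j`, i.e. there is a directed path from `i` to `j`. -/
def anc (i j : V) : Prop := Relation.TransGen G.arrow i j

/-- Adjacency: there is some edge between `i` and `j`. -/
def adj (i j : V) : Prop := G.arrow i j ∨ G.arrow j i ∨ G.arc i j

/-- A directed ancestral graph: a simple mixed graph with arrows and arcs, no directed
cycle, and no arc one of whose endpoints is an ancestor of the other. -/
def IsDirectedAncestral : Prop :=
  (∀ i j, G.arc i j ↔ G.arc j i) ∧
  (∀ i, ¬ G.arc i i) ∧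
  (∀ i j, ¬ (G.arrow i j ∧ G.arrow j i)) ∧
  (∀ i j, ¬ (G.arrow i j ∧ G.arc i j)) ∧
  (∀ i, ¬ G.anc i i) ∧
  (∀ i j, G.arc i j → ¬ G.anc i j ∧ ¬ G.anc j i)

/-- A DAG: only arrows, and no directed cycle. -/
def IsDAG : Prop := (∀ i j, ¬ G.arc i j) ∧ (∀ i, ¬ G.anc i i)

/-- There is an edge between `i` and `j` with an arrowhead at `j`. -/
def headInto (i j : V) : Prop := G.arrow i j ∨ G.arc i j

/-- The inner node `b` of a tripath `⟨a,b,c⟩` is a collider. -/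
def collider (a b c : V) : Prop := G.headInto a b ∧ G.headInto c b

/-- The list of nodes `p` is a path which is connecting given `C` : consecutive nodes are
adjacent, no node is repeated, every collider inner node is in `C` or an ancestor of a node
in `C`, and every non-collider inner node is not in `C`. -/
def Connecting (C : Set V) (p : List V) : Prop :=
  p.Nodup ∧ p.Chain' G.adj ∧
  ∀ t, 0 < t → ∀ (h1 : t - 1 < p.length) (h2 : t < p.length) (h3 : t + 1 < p.length),
    (G.collider (p.get ⟨t-1, h1⟩) (p.get ⟨t, h2⟩) (p.get ⟨t+1, h3⟩) →
      p.get ⟨t, h2⟩ ∈ C ∨ ∃ c ∈ C, G.anc (p.get ⟨t, h2⟩) c) ∧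
    (¬ G.collider (p.get ⟨t-1, h1⟩) (p.get ⟨t, h2⟩) (p.get ⟨t+1, h3⟩) →
      p.get ⟨t, h2⟩ ∉ C)

/-- m-separation : `A ⊥ B | C` in `G` iff there is no connecting path between `A` and `B`
given `C`. -/
def mSep (A B C : Set V) : Prop :=
  ¬ ∃ p : List V, G.Connecting C p ∧
      (∃ a ∈ A, p.head? = some a) ∧ (∃ b ∈ B, p.getLast? = some b)

/-- Two graphs are Markov equivalent if they induce the same independence model by
m-separation. -/
def MarkovEquiv (H : MixedGraph V) : Prop :=
  ∀ A B C : Set V, Disjoint A B → Disjoint A C → Disjoint B C →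
    (G.mSep A B C ↔ H.mSep A B C)

/-- `G` is maximal: every pair of non-adjacent nodes is separated given some set. -/
def Maximal : Prop :=
  ∀ i j : V, i ≠ j → ¬ G.adj i j → ∃ C : Set V, i ∉ C ∧ j ∉ C ∧ G.mSep {i} {j} C

/-- `an(i,j) = (an(i) ∪ an(j)) \ {i,j}`. -/
def anSet (i j : V) : Set V :=
  {k | (G.anc k i ∨ G.anc k j) ∧ k ≠ i ∧ k ≠ j}

/-- The strict form of the minimal order of `G` : `a < b` iff `b` is an ancestor of `a`. -/
def minLt (a b : V) : Prop := G.anc b a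

end MixedGraph

/-! ## Abstract (singleton) independence relations and stability conditions -/

section IndependenceRelations

variable {V : Type}

/-- Ordered upward-stability of a singleton independence relation `ci` w.r.t. the strict
partial order `lt`. -/
def UpStab (lt : V → V → Prop) (ci : V → V → Set V → Prop) : Prop :=
  ∀ i j (C : Set V), i ≠ j → i ∉ C → j ∉ C → ci i j C →
    ∀ k, k ≠ i → k ≠ j → (lt i k ∨ lt j k) → ci i j (C ∪ {k})

/-- Ordered downward-stability of a singleton independence relation `ci` w.r.t. the strict
partial order `lt`. -/
def DownStab (lt : V → V → Prop) (ci : V → V → Set V → Prop) : Prop :=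
  ∀ i j (C : Set V), i ≠ j → i ∉ C → j ∉ C → ci i j C →
    ∀ k, ¬ lt i k → ¬ lt j k → (∀ l ∈ C \ {k}, ¬ lt l k) → ci i j (C \ {k})

/-- The skeleton of an independence relation: `i` and `j` are adjacent iff there is no `C`
with `⟨i,j|C⟩` an independence. -/
def skP (ci : V → V → Set V → Prop) (i j : V) : Prop :=
  i ≠ j ∧ ¬ ∃ C : Set V, i ∉ C ∧ j ∉ C ∧ ci i j C

/-- An output of a natural constraint-based structure-learning algorithm: a graph `H` whose
skeleton is the skeleton of the independence relation `ci`, obtained by directing the edges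
of that skeleton according to a `P`-compatible partial order (given here by its strict form
`lt`, required to coincide with the minimal order of `H`), w.r.t. which ordered upward- and
downward-stability hold. -/
def NaturalOutput (ci : V → V → Set V → Prop) (H : MixedGraph V) : Prop :=
  (∀ i j, H.adj i j ↔ skP ci i j) ∧
  ∃ lt : V → V → Prop, Irreflexive lt ∧ Transitive lt ∧
    (∀ i j, H.arrow i j ↔ (skP ci i j ∧ lt j i)) ∧
    (∀ i j, H.arc i j ↔ (skP ci i j ∧ ¬ lt i j ∧ ¬ lt j i)) ∧
    (∀ a b, lt a b ↔ H.minLt a b) ∧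
    UpStab lt ci ∧ DownStab lt ci

/-- Singleton-transitivity. -/
def SingletonTransitive (ci : V → V → Set V → Prop) : Prop :=
  ∀ i j k (C : Set V), i ≠ j → i ≠ k → j ≠ k → i ∉ C → j ∉ C → k ∉ C →
    ci i j C → ci i j (C ∪ {k}) → ci i k C ∨ ci j k C

/-- `ci` is V-unstable : there is a V-configuration `⟨i,k,j⟩` in the skeleton of `ci` and a
set `C` disjoint from `{i,j,k}` with `⟨i,j|C⟩` and `⟨i,j|C∪{k}⟩` independencies. -/
def VUnstable (ci : V → V → Set V → Prop) : Prop :=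
  ∃ i k j : V, ∃ C : Set V, i ≠ j ∧ i ≠ k ∧ j ≠ k ∧
    skP ci i k ∧ skP ci k j ∧ ¬ skP ci i j ∧
    i ∉ C ∧ j ∉ C ∧ k ∉ C ∧ ci i j C ∧ ci i j (C ∪ {k})

def VStable (ci : V → V → Set V → Prop) : Prop := ¬ VUnstable ci

/-- `ci` is path-unstable : there is a path `⟨i, i₁, …, i_r, k, j⟩` in the skeleton of `ci`
with `i,j` non-adjacent and every `i_n` adjacent to `j`, and a set `C` disjoint from
`{i,j,k}`, such that `⟨i,j | U∪C⟩` and `⟨i,j | U∪C∪{k}⟩` are independencies, where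
`U = {i₁,…,i_r}`. -/
def PathUnstable (ci : V → V → Set V → Prop) : Prop :=
  ∃ (i k j : V) (is : List V) (C : Set V),
    (i :: (is ++ [k, j])).Nodup ∧
    (i :: (is ++ [k, j])).Chain' (skP ci) ∧
    ¬ skP ci i j ∧
    (∀ m ∈ is, skP ci m j) ∧
    i ∉ C ∧ j ∉ C ∧ k ∉ C ∧
    ci i j ({m | m ∈ is} ∪ C) ∧ ci i j (({m | m ∈ is} ∪ C) ∪ {k})

def PathStable (ci : V → V → Set V → Prop) : Prop := ¬ PathUnstable ci

/-- The uniqueness property: all maximal directed ancestral graphs with the skeleton of `ci`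
w.r.t. (the minimal order of) which `ci` satisfies ordered upward- and downward-stability
are Markov equivalent. -/
def UniquenessProp (ci : V → V → Set V → Prop) : Prop :=
  ∀ H1 H2 : MixedGraph V,
    H1.IsDirectedAncestral → H1.Maximal → (∀ i j, H1.adj i j ↔ skP ci i j) →
      UpStab H1.minLt ci → DownStab H1.minLt ci →
    H2.IsDirectedAncestral → H2.Maximal → (∀ i j, H2.adj i j ↔ skP ci i j) →
      UpStab H2.minLt ci → DownStab H2.minLt ci →
    H1.MarkovEquiv H2

/-- The DAG-uniqueness property: all DAGs with the skeleton of `ci` w.r.t. which `ci`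
satisfies ordered upward- and downward-stability are Markov equivalent. -/
def DAGUniquenessProp (ci : V → V → Set V → Prop) : Prop :=
  ∀ H1 H2 : MixedGraph V,
    H1.IsDAG → (∀ i j, H1.adj i j ↔ skP ci i j) →
      UpStab H1.minLt ci → DownStab H1.minLt ci →
    H2.IsDAG → (∀ i j, H2.adj i j ↔ skP ci i j) →
      UpStab H2.minLt ci → DownStab H2.minLt ci →
    H1.MarkovEquiv H2

end IndependenceRelations

/-! ## Probabilistic conditional independence of collections of variables -/

section Probabilistic

variable {V : Type} {Ω : Type} [MeasurableSpace Ω]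
  {𝓧 : V → Type}

/-- The tuple of variables `X_A`. -/
def restrictVars (X : ∀ v, Ω → 𝓧 v) (A : Set V) : Ω → ∀ a : A, 𝓧 a :=
  fun ω a => X a ω

variable [StandardBorelSpace Ω] [Nonempty Ω] [∀ v, MeasurableSpace (𝓧 v)]

theorem measurable_restrictVars {X : ∀ v, Ω → 𝓧 v} (hX : ∀ v, Measurable (X v))
    (A : Set V) : Measurable (restrictVars X A) :=
  measurable_pi_lambda _ fun a => hX a

/-- `⟨A,B|C⟩ ∈ J(P)` : the tuple `X_A` is conditionally independent of `X_B` given `X_C`. -/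
def CI (μ : Measure Ω) [IsFiniteMeasure μ] (X : ∀ v, Ω → 𝓧 v)
    (hX : ∀ v, Measurable (X v)) (A B C : Set V) : Prop :=
  CondIndepFun (MeasurableSpace.comap (restrictVars X C) MeasurableSpace.pi)
    (Measurable.comap_le (measurable_restrictVars hX C))
    (restrictVars X A) (restrictVars X B) μ

/-- Singleton conditional independence `i ⫫ j | C`. -/
def ciP (μ : Measure Ω) [IsFiniteMeasure μ] (X : ∀ v, Ω → 𝓧 v)
    (hX : ∀ v, Measurable (X v)) (i j : V) (C : Set V) : Prop :=
  CI μ X hX {i} {j} C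

/-- `P` is Markovian to `G` : `J(G) ⊆ J(P)`. -/
def Markovian (μ : Measure Ω) [IsFiniteMeasure μ] (X : ∀ v, Ω → 𝓧 v)
    (hX : ∀ v, Measurable (X v)) (G : MixedGraph V) : Prop :=
  ∀ A B C : Set V, Disjoint A B → Disjoint A C → Disjoint B C →
    G.mSep A B C → CI μ X hX A B C

/-- `P` and `G` are faithful : `J(G) = J(P)`. -/
def Faithful (μ : Measure Ω) [IsFiniteMeasure μ] (X : ∀ v, Ω → 𝓧 v)
    (hX : ∀ v, Measurable (X v)) (G : MixedGraph V) : Prop :=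
  ∀ A B C : Set V, Disjoint A B → Disjoint A C → Disjoint B C →
    (G.mSep A B C ↔ CI μ X hX A B C)

/-- `P` is converse pairwise Markovian to `G`. -/
def ConvPairwiseMarkov (μ : Measure Ω) [IsFiniteMeasure μ] (X : ∀ v, Ω → 𝓧 v)
    (hX : ∀ v, Measurable (X v)) (G : MixedGraph V) : Prop :=
  ∀ i j : V, i ≠ j → ciP μ X hX i j (G.anSet i j) → ¬ G.adj i j

end Probabilistic

namespace DagUniq

section Rel

variable {V : Type}

/-- Bayes-ball step. -/
def stp (r : V → V → Prop) (C : Set V) (s t : V × Bool) : Prop :=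
  (r s.1 t.1 ∧ t.2 = true ∧ s.1 ∉ C) ∨
  (r t.1 s.1 ∧ t.2 = false ∧ ((s.2 = true ∧ s.1 ∈ C) ∨ (s.2 = false ∧ s.1 ∉ C)))

/-- Reachable states. -/
def Rch (r : V → V → Prop) (C : Set V) (a v : V) (d : Bool) : Prop :=
  Relation.ReflTransGen (stp r C) (a, false) (v, d)

def Acyc (r : V → V → Prop) : Prop := ∀ i, ¬ Relation.TransGen r i i

def Adj (r : V → V → Prop) (i j : V) : Prop := r i j ∨ r j i

def SameImm (r q : V → V → Prop) : Prop :=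
  ∀ i k j, i ≠ j → ¬ Adj r i j → ((r i k ∧ r j k) ↔ (q i k ∧ q j k))

def Covered (r : V → V → Prop) (x y : V) : Prop :=
  r x y ∧ ∀ z, z ≠ x → (r z y ↔ r z x)

def rev (r : V → V → Prop) (x y : V) (a b : V) : Prop :=
  (r a b ∧ ¬ (a = x ∧ b = y)) ∨ (a = y ∧ b = x)

theorem Acyc.asymm {r : V → V → Prop} (h : Acyc r) {a b : V} (h1 : r a b) (h2 : r b a) : False :=
  h a (.tail (.single h1) h2)

theorem Acyc.irr {r : V → V → Prop} (h : Acyc r) {a : V} (h1 : r a a) : False :=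
  h a (.single h1)

theorem Acyc.tri {r : V → V → Prop} (h : Acyc r) {a b c : V} (h1 : r a b) (h2 : r b c)
    (h3 : r c a) : False :=
  h a (.tail (.tail (.single h1) h2) h3)

theorem Rch.down {r : V → V → Prop} {C : Set V} {a v w : V} {d : Bool} (h : Rch r C a v d)
    (h1 : r v w) (hC : v ∉ C) : Rch r C a w true :=
  Relation.ReflTransGen.tail h (Or.inl ⟨h1, rfl, hC⟩)

theorem Rch.upC {r : V → V → Prop} {C : Set V} {a v w : V} (h : Rch r C a v true)
    (h1 : r w v) (hC : v ∈ C) : Rch r C a w false :=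
  Relation.ReflTransGen.tail h (Or.inr ⟨h1, rfl, Or.inl ⟨rfl, hC⟩⟩)

theorem Rch.up {r : V → V → Prop} {C : Set V} {a v w : V} (h : Rch r C a v false)
    (h1 : r w v) (hC : v ∉ C) : Rch r C a w false :=
  Relation.ReflTransGen.tail h (Or.inr ⟨h1, rfl, Or.inr ⟨rfl, hC⟩⟩)

/-- Simulation invariant. -/
def Inv (q : V → V → Prop) (C : Set V) (a x y v : V) (d : Bool) : Prop :=
  (v ≠ x → v ≠ y → Rch q C a v d) ∧
  (v = x → d = true → Rch q C a x true ∧ Rch q C a y true) ∧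
  (v = x → d = false → Rch q C a x false ∨ (Rch q C a x true ∧ 
    ((Rch q C a y true ∧ y ∈ C) ∨ (Rch q C a y false ∧ y ∉ C)))) ∧
  (v = y → d = true → (Rch q C a x true ∧ Rch q C a y true) ∨ (Rch q C a x false ∧ x ∉ C) ∨ 
    (Rch q C a y false ∧ y ∉ C)) ∧
  (v = y → d = false → Rch q C a y false)

theorem inv_step {r : V → V → Prop} (hr : Acyc r) {x y : V} (hc : Covered r x y) {C : Set V} {a : V}
    {v : V} {d : Bool} {w : V} {e : Bool} (h : Inv (rev r x y) C a x y v d)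
    (hs : stp r C (v, d) (w, e)) : Inv (rev r x y) C a x y w e := by
  obtain ⟨hxy, hcov⟩ := hc
  have hne : x ≠ y := fun h => hr.irr (h ▸ hxy)
  have hyx : ¬ r y x := fun h => hr.asymm hxy h
  have irr : ∀ z, ¬ r z z := fun z h => hr.irr h
  have hyx' : rev r x y y x := Or.inr ⟨rfl, rfl⟩
  have hrev : ∀ s t, r s t → (s ≠ x ∨ t ≠ y) → rev r x y s t := fun s t h1 h2 =>
    Or.inl ⟨h1, by tauto⟩
  obtain ⟨h1, h2, h3, h4, h5⟩ := h
  have D := @Rch.down V (rev r x y) C a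
  have UC := @Rch.upC V (rev r x y) C a
  have U := @Rch.up V (rev r x y) C a
  generalize rev r x y = q at *
  rcases hs with ⟨hvw, he, hvC⟩ | ⟨hwv, he, hh⟩
  · simp only at hvw he hvC
    subst he
    have hq := hrev v w hvw
    have hcv := hcov v
    rcases eq_or_ne v x with hvx | hvx
    · subst hvx
      rcases eq_or_ne w y with hwy | hwy
      · subst hwy
        refine ⟨by simp, fun h => (hne h.symm).elim, by simp, fun _ _ => ?_, by simp⟩
        cases d
        · rcases h3 rfl rfl with h | ⟨h, h' | h'⟩
          · exact Or.inr (Or.inl ⟨h, hvC⟩)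
          · exact Or.inl ⟨h, h'.1⟩
          · exact Or.inr (Or.inr h')
        · exact Or.inl (h2 rfl rfl)
      · have hq' := hq (Or.inr hwy)
        have hw : Rch q C a w true := by
          cases d
          · rcases h3 rfl rfl with h | h
            · exact D h hq' hvC
            · exact D h.1 hq' hvC
          · exact D (h2 rfl rfl).1 hq' hvC
        have hwx : w ≠ v := fun h => irr v (h ▸ hvw)
        exact ⟨fun _ _ => hw, fun h => (hwx h).elim, fun h => (hwx h).elim,
          fun h => (hwy h).elim, fun h => (hwy h).elim⟩
    have hq' := hq (Or.inl hvx)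
    rcases eq_or_ne v y with hvy | hvy
    · subst hvy
      have hwx : w ≠ x := fun h => hyx (h ▸ hvw)
      have hwy : w ≠ v := fun h => irr v (h ▸ hvw)
      have hw : Rch q C a w true := by
        cases d
        · exact D (h5 rfl rfl) hq' hvC
        · rcases h4 rfl rfl with h | h | h
          · exact D h.2 hq' hvC
          · exact D (U h.1 hyx' h.2) hq' hvC
          · exact D h.1 hq' hvC
      exact ⟨fun _ _ => hw, fun h => (hwx h).elim, fun h => (hwx h).elim,
          fun h => (hwy h).elim, fun h => (hwy h).elim⟩
    have hv := h1 hvx hvy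
    have hw := D hv hq' hvC
    refine ⟨fun _ _ => hw, ?_, by simp, ?_, by simp⟩
    · rintro rfl _
      exact ⟨hw, D hv (hrev _ _ ((hcv hvx).2 hvw) (Or.inl hvx)) hvC⟩
    · rintro rfl _
      exact Or.inl ⟨D hv (hrev _ _ ((hcv hvx).1 hvw) (Or.inl hvx)) hvC, hw⟩
  · simp only at hwv he hh
    subst he
    have hq := hrev w v hwv
    have hcw := hcov w
    rcases eq_or_ne v x with hvx | hvx
    · subst hvx
      have hwx : w ≠ v := fun h => irr v (h ▸ hwv)
      have hwy : w ≠ y := fun h => hyx (h ▸ hwv)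
      have hw : Rch q C a w false := by
        rcases hh with ⟨rfl, hC⟩ | ⟨rfl, hC⟩
        · exact UC (h2 rfl rfl).1 (hq (Or.inl hwx)) hC
        · have hwy' := hrev _ _ ((hcw hwx).2 hwv) (Or.inl hwx)
          rcases h3 rfl rfl with h | ⟨h, h | h⟩
          · exact U h (hq (Or.inl hwx)) hC
          · exact UC h.1 hwy' h.2
          · exact U h.1 hwy' h.2
      exact ⟨fun _ _ => hw, fun h => (hwx h).elim, fun h => (hwx h).elim,
          fun h => (hwy h).elim, fun h => (hwy h).elim⟩
    rcases eq_or_ne v y with hvy | hvy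
    · subst hvy
      have hwy : w ≠ v := fun h => irr v (h ▸ hwv)
      rcases eq_or_ne w x with hwx | hwx
      · subst hwx
        refine ⟨by simp, by simp, fun _ _ => ?_, fun h => (hwy h).elim, fun h => (hwy h).elim⟩
        rcases hh with ⟨rfl, hC⟩ | ⟨rfl, hC⟩
        · rcases h4 rfl rfl with h | h | h
          · exact Or.inr ⟨h.1, Or.inl ⟨h.2, hC⟩⟩
          · exact Or.inl h.1
          · exact (h.2 hC).elim
        · have h := h5 rfl rfl
          exact Or.inr ⟨D h hyx' hC, Or.inr ⟨h, hC⟩⟩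
      · have hq' := hq (Or.inl hwx)
        have hw : Rch q C a w false := by
          rcases hh with ⟨rfl, hC⟩ | ⟨rfl, hC⟩
          · rcases h4 rfl rfl with h | h | h
            · exact UC h.2 hq' hC
            · exact U h.1 (hrev _ _ ((hcw hwx).1 hwv) (Or.inl hwx)) h.2
            · exact (h.2 hC).elim
          · exact U (h5 rfl rfl) hq' hC
        exact ⟨fun _ _ => hw, fun h => (hwx h).elim, fun h => (hwx h).elim,
          fun h => (hwy h).elim, fun h => (hwy h).elim⟩
    have hv := h1 hvx hvy
    have hw : Rch q C a w false := by
      rcases hh with ⟨rfl, hC⟩ | ⟨rfl, hC⟩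
      · exact UC hv (hq (Or.inr hvy)) hC
      · exact U hv (hq (Or.inr hvy)) hC
    refine ⟨fun _ _ => hw, by simp, ?_, by simp, ?_⟩
    · rintro rfl _
      exact Or.inl hw
    · rintro rfl _
      exact hw

theorem covered_sim {r : V → V → Prop} (hr : Acyc r) {x y : V} (hc : Covered r x y) {C : Set V}
    {a b : V} {d : Bool} (h : Rch r C a b d) : ∃ e, Rch (rev r x y) C a b e := by
  have key : ∀ s : V × Bool, Relation.ReflTransGen (stp r C) (a, false) s →
      Inv (rev r x y) C a x y s.1 s.2 := by
    intro s hs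
    induction hs with
    | refl =>
      have h0 : Rch (rev r x y) C a a false := Relation.ReflTransGen.refl
      refine ⟨fun _ _ => h0, ?_, ?_, ?_, ?_⟩
      · simp
      · rintro rfl _; exact Or.inl h0
      · simp
      · rintro rfl _; exact h0
    | tail _ h2 ih => exact inv_step hr hc ih h2
  obtain ⟨h1, h2, h3, h4, h5⟩ := key _ h
  have hyx' : rev r x y y x := Or.inr ⟨rfl, rfl⟩
  have U := @Rch.up V (rev r x y) C a
  simp only at h1 h2 h3 h4 h5
  by_cases hx : b = x
  · subst hx
    cases d
    · rcases h3 rfl rfl with h | h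
      · exact ⟨_, h⟩
      · exact ⟨_, h.1⟩
    · exact ⟨_, (h2 rfl rfl).1⟩
  by_cases hy : b = y
  · subst hy
    cases d
    · exact ⟨_, h5 rfl rfl⟩
    · rcases h4 rfl rfl with h | h | h
      · exact ⟨_, h.2⟩
      · exact ⟨_, U h.1 hyx' h.2⟩
      · exact ⟨_, h.1⟩
  exact ⟨_, h1 hx hy⟩

theorem rev_acyc {r : V → V → Prop} (hr : Acyc r) {x y : V} (hc : Covered r x y) :
    Acyc (rev r x y) := by
  obtain ⟨hxy, hcov⟩ := hc
  have hne : x ≠ y := fun h => hr.irr (h ▸ hxy)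
  set r0 : V → V → Prop := fun a b => r a b ∧ ¬ (a = x ∧ b = y) with hr0
  have h0 : ¬ Relation.ReflTransGen r0 x y := by
    intro h
    rcases Relation.ReflTransGen.cases_tail h with h | ⟨w, hw, hwy⟩
    · exact hne h.symm
    · have hwx : w ≠ x := fun h => hwy.2 ⟨h, rfl⟩
      have : r w x := (hcov w hwx).1 hwy.1
      have hw' : Relation.ReflTransGen r x w := Relation.ReflTransGen.mono (fun _ _ h => h.1) _ _ hw
      exact hr x (Relation.TransGen.tail' hw' this)
  have key : ∀ a b, Relation.TransGen (rev r x y) a b → Relation.TransGen r0 a b ∨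
      (Relation.ReflTransGen r0 a y ∧ Relation.ReflTransGen r0 x b) := by
    intro a b h
    induction h with
    | single h =>
      rcases h with h | ⟨rfl, rfl⟩
      · exact Or.inl (.single h)
      · exact Or.inr ⟨.refl, .refl⟩
    | tail _ h ih =>
      rcases h with h | ⟨rfl, rfl⟩
      · rcases ih with ih | ih
        · exact Or.inl (.tail ih h)
        · exact Or.inr ⟨ih.1, .tail ih.2 h⟩
      · rcases ih with ih | ih
        · exact Or.inr ⟨ih.to_reflTransGen, .refl⟩
        · exact Or.inr ⟨ih.1, .refl⟩
  intro i hi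
  rcases key i i hi with h | h
  · exact hr i (Relation.TransGen.mono (fun _ _ h => h.1) _ _ h)
  · exact h0 (h.2.trans h.1)

theorem rev_adj {r : V → V → Prop} {x y : V} (hxy : r x y) (i j : V) :
    Adj (rev r x y) i j ↔ Adj r i j := by
  unfold Adj rev
  grind

theorem rev_imm {r q : V → V → Prop} (hr : Acyc r) {x y : V} (hc : Covered r x y)
    (h : SameImm r q) : SameImm (rev r x y) q := by
  obtain ⟨hxy, hcov⟩ := hc
  have hyx : ¬ r y x := fun h => hr.asymm hxy h
  have irr : ∀ z, ¬ r z z := fun z h => hr.irr h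
  intro i k j hij hadj
  rw [rev_adj hxy] at hadj
  rw [← h i k j hij hadj]
  unfold Adj at hadj
  unfold rev
  grind

theorem exists_covered [Finite V] {r q : V → V → Prop} (hr : Acyc r) (hq : Acyc q)
    (hadj : ∀ i j, Adj r i j ↔ Adj q i j) (himm : SameImm r q) {x0 y0 : V} (h0 : r x0 y0)
    (h0' : q y0 x0) : ∃ x y, r x y ∧ q y x ∧ Covered r x y := by
  have : IsTrans V (Relation.TransGen r) := ⟨fun _ _ _ => Relation.TransGen.trans⟩
  have : Std.Irrefl (Relation.TransGen r) := ⟨hr⟩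
  have wf : WellFounded (Relation.TransGen r) := Finite.wellFounded_of_trans_of_irrefl _
  have wf' : WellFounded (Function.swap (Relation.TransGen r)) := by
    have : IsTrans V (Function.swap (Relation.TransGen r)) :=
      ⟨fun _ _ _ h1 h2 => Relation.TransGen.trans h2 h1⟩
    have : Std.Irrefl (Function.swap (Relation.TransGen r)) := ⟨hr⟩
    exact Finite.wellFounded_of_trans_of_irrefl _
  obtain ⟨y, ⟨x1, hx1, hx1'⟩, hymin⟩ := wf.has_min {y | ∃ x, r x y ∧ q y x} ⟨y0, x0, h0, h0'⟩
  obtain ⟨x, ⟨hxy, hyx⟩, hxmax⟩ := wf'.has_min {x | r x y ∧ q y x} ⟨x1, hx1, hx1'⟩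
  have hymin' : ∀ z, r z y → ∀ w, r w z → ¬ q z w := fun z hz w hw hzw =>
    hymin z ⟨w, hw, hzw⟩ (.single hz)
  have hxmax' : ∀ z, r z y → q y z → ¬ r x z := fun z hz hz' hxz =>
    hxmax z ⟨hz, hz'⟩ (.single hxz)
  have rt := @Acyc.tri V r hr
  have qt := @Acyc.tri V q hq
  have ra := @Acyc.asymm V r hr
  have qa := @Acyc.asymm V q hq
  have ri := @Acyc.irr V r hr
  refine ⟨x, y, hxy, hyx, hxy, ?_⟩
  intro z hz
  unfold Adj at hadj
  constructor
  · intro hzy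
    have hzx : Adj r z x := by
      by_contra hn
      exact qa ((himm z y x hz hn).1 ⟨hzy, hxy⟩).2 hyx
    rcases hzx with h | h
    · exact h
    exfalso
    by_cases hyz : q y z
    · exact hxmax' z hzy hyz h
    · have h1 : q z y := by have := (hadj z y).1 (Or.inl hzy); tauto
      have h2 : ¬ q z x := hymin' z hzy x h
      have h3 : q x z := by have := (hadj x z).1 (Or.inl h); tauto
      exact qt h1 hyx h3
  · intro hzx
    have hzx' : q z x := by
      have := (hadj z x).1 (Or.inl hzx)
      have := hymin' x hxy z hzx
      tauto
    have hne : z ≠ y := fun h => ra hxy (h ▸ hzx)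
    have : Adj r z y := by
      by_contra hn
      exact ra hxy ((himm z x y hne hn).2 ⟨hzx', hyx⟩).2
    rcases this with h | h
    · exact h
    · exact (rt hzx hxy h).elim

theorem rch_equiv [Finite V] {q : V → V → Prop} (hq : Acyc q) {C : Set V} {a b : V} :
    ∀ (n : ℕ) (r : V → V → Prop) (_ : Acyc r) (_ : ∀ i j, Adj r i j ↔ Adj q i j)
      (_ : SameImm r q) (_ : {p : V × V | r p.1 p.2 ∧ q p.2 p.1}.ncard = n) (d : Bool)
      (_ : Rch r C a b d), ∃ e, Rch q C a b e := by
  intro n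
  induction n using Nat.strong_induction_on with
  | _ n ih =>
  intro r hr hadj himm hn d h
  by_cases hex : ∃ x0 y0, r x0 y0 ∧ q y0 x0
  · obtain ⟨x0, y0, h0, h0'⟩ := hex
    obtain ⟨x, y, hxy, hyx, hc⟩ := exists_covered hr hq hadj himm h0 h0'
    obtain ⟨e, he⟩ := covered_sim hr hc h
    refine ih _ ?_ (rev r x y) (rev_acyc hr hc) (fun i j => (rev_adj hxy i j).trans (hadj i j))
      (rev_imm hr hc himm) rfl e he
    rw [← hn]
    apply Set.ncard_lt_ncard _ (Set.toFinite _)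
    rw [Set.ssubset_iff_of_subset]
    · refine ⟨(x, y), ⟨hxy, hyx⟩, ?_⟩
      rintro ⟨h1 | h1, _⟩
      · exact h1.2 ⟨rfl, rfl⟩
      · have h2 : x = y := h1.1
        exact hr.irr (h2 ▸ hxy)
    · rintro ⟨s, t⟩ ⟨h1 | h1, h2⟩
      · exact ⟨h1.1, h2⟩
      · obtain ⟨rfl, rfl⟩ := h1
        exact (hq.asymm h2 hyx).elim
  · have : r = q := by
      funext i j
      apply propext
      have h1 := hadj i j
      unfold Adj at h1
      have h2 : r i j → ¬ q j i := fun h h' => hex ⟨i, j, h, h'⟩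
      have h3 : r j i → ¬ q i j := fun h h' => hex ⟨j, i, h, h'⟩
      constructor
      · intro h; tauto
      · intro h; tauto
    exact ⟨d, this ▸ h⟩

/-- Walks whose colliders are ancestors of `C`. -/
def Wk (r : V → V → Prop) (C : Set V) (n : ℕ) (f : ℕ → V) : Prop :=
  (∀ t, t < n → Adj r (f t) (f (t+1))) ∧
  ∀ t, t + 1 < n →
    ((r (f t) (f (t+1)) ∧ r (f (t+2)) (f (t+1))) →
      f (t+1) ∈ C ∨ ∃ c ∈ C, Relation.TransGen r (f (t+1)) c) ∧
    (¬ (r (f t) (f (t+1)) ∧ r (f (t+2)) (f (t+1))) → f (t+1) ∉ C)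

theorem bounce {r : V → V → Prop} {C : Set V} {a v c : V} (hc : c ∈ C)
    (h : Relation.TransGen r v c) : v ∉ C → Rch r C a v true → Rch r C a v false := by
  induction h using Relation.TransGen.head_induction_on with
  | single h => intro hv h1; exact (h1.down h hv).upC h hc
  | @head s u h _ ih =>
    intro hv h1
    by_cases hu : u ∈ C
    · exact (h1.down h hv).upC h hu
    · exact (ih hu (h1.down h hv)).up h hu

theorem wk_to_rch {r : V → V → Prop} (hr : Acyc r) {C : Set V} {n : ℕ} {f : ℕ → V}
    (h : Wk r C n f) (h0 : f 0 ∉ C) : ∃ d, Rch r C (f 0) (f n) d := by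
  have key : ∀ t, t + 1 ≤ n → (r (f t) (f (t+1)) → Rch r C (f 0) (f (t+1)) true) ∧
      (r (f (t+1)) (f t) → Rch r C (f 0) (f (t+1)) false) := by
    intro t
    induction t with
    | zero =>
      intro _
      have hh : Rch r C (f 0) (f 0) false := Relation.ReflTransGen.refl
      exact ⟨fun h1 => hh.down h1 h0, fun h1 => hh.up h1 h0⟩
    | succ t ih =>
      intro ht
      obtain ⟨i1, i2⟩ := ih (by omega)
      have ha := h.1 t (by omega)
      obtain ⟨c1, c2⟩ := h.2 t (by omega)
      have e : t + 1 + 1 = t + 2 := rfl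
      rw [e]
      constructor
      · intro h1
        have hC := c2 (fun hh => hr.asymm h1 hh.2)
        rcases ha with ha | ha
        · exact (i1 ha).down h1 hC
        · exact (i2 ha).down h1 hC
      · intro h1
        rcases ha with ha | ha
        · by_cases hC : f (t+1) ∈ C
          · exact (i1 ha).upC h1 hC
          · rcases c1 ⟨ha, h1⟩ with hh | ⟨c, hc, hh⟩
            · exact (hC hh).elim
            · exact (bounce hc hh hC (i1 ha)).up h1 hC
        · exact (i2 ha).up h1 (c2 fun hh => hr.asymm ha hh.1)
  rcases n with _ | n
  · exact ⟨false, .refl⟩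
  · rcases h.1 n (by omega) with h1 | h1
    · exact ⟨_, (key n le_rfl).1 h1⟩
    · exact ⟨_, (key n le_rfl).2 h1⟩

theorem rch_to_wk {r : V → V → Prop} (hr : Acyc r) {C : Set V} {a b : V} {d : Bool}
    (h : Rch r C a b d) : ∃ n f, Wk r C n f ∧ f 0 = a ∧ f n = b := by
  have key : ∀ s : V × Bool, Relation.ReflTransGen (stp r C) (a, false) s →
      ∃ n f, Wk r C n f ∧ f 0 = a ∧ f n = s.1 ∧
        ∀ m, n = m + 1 → (s.2 = true ↔ r (f m) (f (m+1))) := by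
    intro s hs
    induction hs with
    | refl => exact ⟨0, fun _ => a, ⟨by simp, by simp⟩, rfl, rfl, by simp⟩
    | tail _ h2 ih =>
      rename_i u w _
      obtain ⟨n, f, ⟨hw1, hw2⟩, hf0, hfn, hd⟩ := ih
      obtain ⟨g, hg1, hg2⟩ : ∃ g : ℕ → V, (∀ t, t ≤ n → g t = f t) ∧ g (n+1) = w.1 :=
        ⟨fun t => if t ≤ n then f t else w.1, fun t ht => by simp [ht], by simp⟩
      have hgn : g n = u.1 := (hg1 n le_rfl).trans hfn
      refine ⟨n+1, g, ⟨?_, ?_⟩, ?_, hg2, ?_⟩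
      · intro t ht
        by_cases htn : t = n
        · subst htn
          rw [hgn, hg2]
          rcases h2 with h | h
          · exact Or.inl h.1
          · exact Or.inr h.1
        · rw [hg1 t (by omega), hg1 (t+1) (by omega)]
          exact hw1 t (by omega)
      · intro t ht
        by_cases htn : t + 1 = n
        · subst htn
          have hd' := hd t rfl
          have e : t + 2 = t + 1 + 1 := rfl
          rw [e, hg2, hgn, hg1 t (by omega)]
          rw [hfn] at hd'
          rcases h2 with ⟨h3, h4, h5⟩ | ⟨h3, h4, h5⟩
          · exact ⟨fun hh => (hr.asymm h3 hh.2).elim, fun _ => h5⟩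
          · rcases h5 with h5 | h5
            · exact ⟨fun _ => Or.inl h5.2, fun hh => (hh ⟨hd'.1 h5.1, h3⟩).elim⟩
            · refine ⟨fun hh => ?_, fun _ => h5.2⟩
              have := hd'.2 hh.1
              rw [h5.1] at this
              cases this
        · rw [hg1 t (by omega), hg1 (t+1) (by omega), hg1 (t+2) (by omega)]
          exact hw2 t (by omega)
      · rw [hg1 0 (by omega), hf0]
      · intro m hm
        obtain rfl : n = m := by omega
        rw [hgn, hg2]
        rcases h2 with ⟨h3, h4, h5⟩ | ⟨h3, h4, h5⟩
        · simp [h3, h4]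
        · simp only [h4]
          exact iff_of_false (by simp) (fun hh => hr.asymm h3 hh)
  obtain ⟨n, f, h1, h2, h3, _⟩ := key _ h
  exact ⟨n, f, h1, h2, h3⟩

theorem wk_splice {r : V → V → Prop} (hr : Acyc r) {C : Set V} {n : ℕ} {f : ℕ → V}
    (h : Wk r C n f) {i j : ℕ} (hij : i < j) (hj : j ≤ n) (he : f i = f j) :
    ∃ n' g, n' < n ∧ Wk r C n' g ∧ g 0 = f 0 ∧ g n' = f n := by
  obtain ⟨k, rfl⟩ : ∃ k, j = i + k := ⟨j - i, by omega⟩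
  obtain ⟨m, rfl⟩ : ∃ m, n = m + k := ⟨n - k, by omega⟩
  have hk : 0 < k := by omega
  obtain ⟨g, hg1, hg2⟩ : ∃ g : ℕ → V, (∀ t, t ≤ i → g t = f t) ∧ (∀ t, i ≤ t → g t = f (t+k)) := by
    refine ⟨fun t => if t ≤ i then f t else f (t+k), fun t ht => by simp [ht], fun t ht => ?_⟩
    by_cases hh : t ≤ i
    · obtain rfl : t = i := by omega
      simp [he]
    · simp [hh]
  obtain ⟨w1, w2⟩ := h
  refine ⟨m, g, by omega, ⟨?_, ?_⟩, hg1 0 (by omega), hg2 m (by omega)⟩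
  · intro t ht
    by_cases hti : t < i
    · rw [hg1 t (by omega), hg1 (t+1) (by omega)]
      exact w1 t (by omega)
    · rw [hg2 t (by omega), hg2 (t+1) (by omega)]
      have := w1 (t+k) (by omega)
      rwa [show t + k + 1 = t + 1 + k by omega] at this
  · intro t ht
    rcases lt_trichotomy (t+1) i with hti | hti | hti
    · rw [hg1 t (by omega), hg1 (t+1) (by omega), hg1 (t+2) (by omega)]
      exact w2 t (by omega)
    · subst hti
      rw [hg1 t (by omega), hg1 (t+1) (by omega), hg2 (t+2) (by omega)]
      obtain ⟨a1, a2⟩ := w2 t (by omega)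
      obtain ⟨b1, b2⟩ := w2 (t+k) (by omega)
      rw [show t + k + 1 = t + 1 + k by omega, show t + k + 2 = t + 2 + k by omega, ← he] at b1 b2
      constructor
      · rintro ⟨c1, c2⟩
        by_cases hcol : r (f (t+2)) (f (t+1))
        · exact a1 ⟨c1, hcol⟩
        have hs : r (f (t+1)) (f (t+2)) := by
          rcases w1 (t+1) (by omega) with h | h
          · exact h
          · exact (hcol h).elim
        by_contra hno
        have key : ∀ s, s + 1 ≤ k → Relation.TransGen r (f (t+1)) (f (t+1+s+1)) ∧
            r (f (t+1+s)) (f (t+1+s+1)) := by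
          intro s
          induction s with
          | zero => intro _; exact ⟨.single hs, hs⟩
          | succ s ih =>
            intro hsk
            obtain ⟨i1, i2⟩ := ih (by omega)
            have hn : ¬ r (f (t+1+s+2)) (f (t+1+s+1)) := by
              intro hh
              rcases (w2 (t+1+s) (by omega)).1 ⟨i2, hh⟩ with hh | ⟨c, hc, hh⟩
              · exact hno (Or.inr ⟨_, hh, i1⟩)
              · exact hno (Or.inr ⟨c, hc, i1.trans hh⟩)
            have hr2 : r (f (t+1+s+1)) (f (t+1+s+2)) := by
              rcases w1 (t+1+s+1) (by omega) with h | h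
              · exact h
              · exact (hn h).elim
            exact ⟨i1.tail hr2, hr2⟩
        have := (key (k-1) (by omega)).1
        rw [show t + 1 + (k-1) + 1 = t + 1 + k by omega, ← he] at this
        exact hr _ this
      · intro hh
        by_cases h1 : r (f t) (f (t+1))
        · exact b2 fun h2 => hh ⟨h1, h2.2⟩
        · exact a2 fun h2 => h1 h2.1
    · rw [hg2 t (by omega), hg2 (t+1) (by omega), hg2 (t+2) (by omega)]
      have := w2 (t+k) (by omega)
      rwa [show t + k + 1 = t + 1 + k by omega, show t + k + 2 = t + 2 + k by omega] at this

theorem wk_inj {r : V → V → Prop} (hr : Acyc r) {C : Set V} (a b : V) :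
    ∀ (n : ℕ) (f : ℕ → V) (_ : Wk r C n f) (_ : f 0 = a) (_ : f n = b),
      ∃ n' g, Wk r C n' g ∧ g 0 = a ∧ g n' = b ∧ ∀ i j, i < j → j ≤ n' → g i ≠ g j := by
  intro n
  induction n using Nat.strong_induction_on with
  | _ n ih =>
  intro f h h0 hn
  by_cases hh : ∃ i j, i < j ∧ j ≤ n ∧ f i = f j
  · obtain ⟨i, j, hij, hj, he⟩ := hh
    obtain ⟨n', g, hlt, hg, hg0, hgn⟩ := wk_splice hr h hij hj he
    exact ih n' hlt g hg (hg0.trans h0) (hgn.trans hn)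
  · exact ⟨n, f, h, h0, hn, fun i j h1 h2 h3 => hh ⟨i, j, h1, h2, h3⟩⟩

end Rel

variable {V : Type}

theorem adj_iff {G : MixedGraph V} (h : G.IsDAG) (i j : V) : G.adj i j ↔ Adj G.arrow i j := by
  have := h.1 i j
  unfold MixedGraph.adj Adj
  tauto

theorem col_iff {G : MixedGraph V} (h : G.IsDAG) (i k j : V) :
    G.collider i k j ↔ (G.arrow i k ∧ G.arrow j k) := by
  have := h.1 i k
  have := h.1 j k
  unfold MixedGraph.collider MixedGraph.headInto
  tauto

theorem conn_to_rch {G : MixedGraph V} (h : G.IsDAG) {C : Set V} {p : List V} {a b : V}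
    (hp : G.Connecting C p) (ha : p.head? = some a) (hb : p.getLast? = some b) (haC : a ∉ C) :
    ∃ d, Rch G.arrow C a b d := by
  obtain ⟨_, hch, htri⟩ := hp
  have hne : p ≠ [] := by rintro rfl; simp at ha
  have hlen : 0 < p.length := List.length_pos_iff.2 hne
  obtain ⟨f, hf⟩ : ∃ f : ℕ → V, ∀ t (ht : t < p.length), f t = p[t] :=
    ⟨fun t => p.getD t a, fun t ht => by simp [ht]⟩
  have hW : Wk G.arrow C (p.length - 1) f := by
    refine ⟨?_, ?_⟩
    · intro t ht
      rw [hf t (by omega), hf (t+1) (by omega), ← adj_iff h]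
      exact (List.isChain_iff_getElem.1 hch) t (by omega)
    · intro t ht
      have := htri (t+1) (by omega) (by omega) (by omega) (by omega)
      rw [col_iff h] at this
      simp only [List.get_eq_getElem, Nat.add_sub_cancel] at this
      rw [hf t (by omega), hf (t+1) (by omega), hf (t+2) (by omega)]
      exact this
  have h0 : f 0 = a := by
    rw [hf 0 hlen]
    rw [List.head?_eq_getElem?, List.getElem?_eq_getElem hlen] at ha
    exact Option.some.inj ha
  have hn : f (p.length - 1) = b := by
    rw [hf _ (by omega)]
    rw [List.getLast?_eq_getElem?, List.getElem?_eq_getElem (by omega)] at hb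
    exact Option.some.inj hb
  obtain ⟨d, hd⟩ := wk_to_rch h.2 hW (h0 ▸ haC)
  exact ⟨d, by rw [h0, hn] at hd; exact hd⟩

theorem rch_to_conn {G : MixedGraph V} (h : G.IsDAG) {C : Set V} {a b : V} {d : Bool}
    (hr : Rch G.arrow C a b d) :
    ∃ p, G.Connecting C p ∧ p.head? = some a ∧ p.getLast? = some b := by
  obtain ⟨n, f, hw, h0, hn⟩ := rch_to_wk h.2 hr
  obtain ⟨n, f, ⟨w1, w2⟩, h0, hn, hinj⟩ := wk_inj h.2 a b n f hw h0 hn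
  have hl : (List.ofFn (fun k : Fin (n+1) => f k)).length = n + 1 := by simp
  refine ⟨List.ofFn (fun k : Fin (n+1) => f k), ⟨?_, ?_, ?_⟩, ?_, ?_⟩
  · rw [List.nodup_ofFn]
    intro i j hij
    rcases lt_trichotomy i j with hh | hh | hh
    · exact (hinj i j hh (by omega) hij).elim
    · exact hh
    · exact (hinj j i hh (by omega) hij.symm).elim
  · refine List.isChain_iff_getElem.2 ?_
    intro t ht
    rw [hl] at ht
    simp only [List.getElem_ofFn]
    rw [adj_iff h]
    exact w1 t (by omega)
  · intro t ht h1 h2 h3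
    obtain ⟨t, rfl⟩ : ∃ s, t = s + 1 := ⟨t - 1, by omega⟩
    rw [col_iff h]
    simp only [List.get_eq_getElem, List.getElem_ofFn, Nat.add_sub_cancel]
    rw [hl] at h3
    exact w2 t (by omega)
  · rw [List.head?_eq_getElem?, List.getElem?_eq_getElem (by omega)]
    simp [h0]
  · rw [List.getLast?_eq_getElem?, List.getElem?_eq_getElem (by omega)]
    simp only [List.getElem_ofFn, hl, Nat.add_sub_cancel, hn]

theorem msep_mono [Finite V] {G H : MixedGraph V} (hG : G.IsDAG) (hH : H.IsDAG)
    (hadj : ∀ i j, G.adj i j ↔ H.adj i j) (himm : SameImm G.arrow H.arrow) {A B C : Set V}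
    (hAC : Disjoint A C) (h : H.mSep A B C) : G.mSep A B C := by
  rintro ⟨p, hp, ⟨a, ha, hpa⟩, ⟨b, hb, hpb⟩⟩
  obtain ⟨d, hd⟩ := conn_to_rch hG hp hpa hpb (Set.disjoint_left.1 hAC ha)
  obtain ⟨e, he⟩ := rch_equiv hH.2 _ G.arrow hG.2
    (fun i j => by rw [← adj_iff hG, ← adj_iff hH, hadj]) himm rfl d hd
  obtain ⟨p', hp', h1, h2⟩ := rch_to_conn hH he
  exact h ⟨p', hp', ⟨a, ha, h1⟩, ⟨b, hb, h2⟩⟩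

theorem remove [Finite V] {G : MixedGraph V} (hG : G.IsDAG) {ci : V → V → Set V → Prop}
    (hd : DownStab G.minLt ci) {i j k : V} (hij : i ≠ j) (hi : ¬ G.anc k i) (hj : ¬ G.anc k j)
    (hki : k ≠ i) (hkj : k ≠ j) :
    ∀ (n : ℕ) (C : Set V), C.ncard = n → i ∉ C → j ∉ C → ci i j C →
      ∃ D : Set V, i ∉ D ∧ j ∉ D ∧ k ∉ D ∧ ci i j D := by
  intro n
  induction n using Nat.strong_induction_on with
  | _ n ih =>
  intro C hn hiC hjC hci
  by_cases hk : k ∈ C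
  swap
  · exact ⟨C, hiC, hjC, hk, hci⟩
  have wf : WellFounded (Function.swap (Relation.TransGen G.arrow)) := by
    have : IsTrans V (Function.swap (Relation.TransGen G.arrow)) :=
      ⟨fun _ _ _ h1 h2 => Relation.TransGen.trans h2 h1⟩
    have : Std.Irrefl (Function.swap (Relation.TransGen G.arrow)) := ⟨hG.2⟩
    exact Finite.wellFounded_of_trans_of_irrefl _
  obtain ⟨m, ⟨hmC, hm⟩, hmax⟩ := wf.has_min {m | m ∈ C ∧ Relation.ReflTransGen G.arrow k m}
    ⟨k, hk, .refl⟩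
  have hci' : ci i j (C \ {m}) := by
    refine hd i j C hij hiC hjC hci m ?_ ?_ ?_
    · intro h; exact hi (Relation.TransGen.trans_right hm h)
    · intro h; exact hj (Relation.TransGen.trans_right hm h)
    · intro l hl h
      exact hmax l ⟨hl.1, (Relation.TransGen.trans_right hm h).to_reflTransGen⟩ h
  refine ih _ ?_ (C \ {m}) rfl (fun h => hiC h.1) (fun h => hjC h.1) hci'
  rw [← hn]
  exact Set.ncard_sdiff_singleton_lt_of_mem hmC (Set.toFinite _)

theorem imm_half [Finite V] {ci : V → V → Set V → Prop} (hvs : VStable ci) {G H : MixedGraph V}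
    (hG : G.IsDAG) (hH : H.IsDAG) (hGs : ∀ i j, G.adj i j ↔ skP ci i j)
    (hHs : ∀ i j, H.adj i j ↔ skP ci i j)
    (hGd : DownStab G.minLt ci) (hHu : UpStab H.minLt ci) {i k j : V} (hij : i ≠ j)
    (hn : ¬ skP ci i j) (h1 : G.arrow i k) (h2 : G.arrow j k) : H.arrow i k ∧ H.arrow j k := by
  by_contra hcon
  have hik : skP ci i k := (hGs i k).1 (Or.inl h1)
  have hkj : skP ci k j := (hGs k j).1 (Or.inr (Or.inl h2))
  have hjk : skP ci j k := (hGs j k).1 (Or.inl h2)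
  obtain ⟨C, hiC, hjC, hci⟩ : ∃ C : Set V, i ∉ C ∧ j ∉ C ∧ ci i j C := by
    by_contra h; exact hn ⟨hij, h⟩
  obtain ⟨D, hiD, hjD, hkD, hciD⟩ := remove hG hGd hij
    (fun h => hG.2 k (h.tail h1)) (fun h => hG.2 k (h.tail h2)) hik.1.symm hkj.1 _ C rfl hiC hjC hci
  refine hvs ⟨i, k, j, D, hij, hik.1, hjk.1, hik, hkj, hn, hiD, hjD, hkD, hciD, ?_⟩
  refine hHu i j D hij hiD hjD hciD k hik.1.symm hkj.1 ?_
  have a1 := (adj_iff hH i k).1 ((hHs i k).2 hik)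
  have a2 := (adj_iff hH j k).1 ((hHs j k).2 hjk)
  rcases a1 with a1 | a1
  · rcases a2 with a2 | a2
    · exact (hcon ⟨a1, a2⟩).elim
    · exact Or.inr (.single a2)
  · exact Or.inl (.single a1)

theorem main [Finite V] {ci : V → V → Set V → Prop} (hvs : VStable ci) : DAGUniquenessProp ci := by
  intro G H hG hGs hGu hGd hH hHs hHu hHd A B C hAB hAC hBC
  have hadj : ∀ i j, G.adj i j ↔ H.adj i j := fun i j => (hGs i j).trans (hHs i j).symm
  have him : SameImm G.arrow H.arrow := by
    intro i k j hij hn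
    rw [← adj_iff hG, hGs] at hn
    exact ⟨fun h => imm_half hvs hG hH hGs hHs hGd hHu hij hn h.1 h.2,
      fun h => imm_half hvs hH hG hHs hGs hHd hGu hij hn h.1 h.2⟩
  have him' : SameImm H.arrow G.arrow := by
    intro i k j hij hn
    rw [← adj_iff hH, ← hadj, adj_iff hG] at hn
    exact (him i k j hij hn).symm
  exact ⟨msep_mono hH hG (fun i j => (hadj i j).symm) him' hAC, msep_mono hG hH hadj him hAC⟩

end DagUniq

/-- Proposition 17(b) of Sadeghi–Soo. -/
theorem statement_10 {V : Type} [Fintype V]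
    {Ω : Type} [MeasurableSpace Ω] [StandardBorelSpace Ω] [Nonempty Ω]
    (μ : Measure Ω) [IsProbabilityMeasure μ]
    {𝓧 : V → Type} [∀ v, MeasurableSpace (𝓧 v)]
    (X : ∀ v, Ω → 𝓧 v) (hX : ∀ v, Measurable (X v))
    (hvs : VStable (ciP μ X hX)) :
    DAGUniquenessProp (ciP μ X hX) := by
  exact DagUniq.main hvs
end

section
/- Let P be a probability distribution over variables (X_v)_{v∈V} that is Markovian to a maximal DAG G_0, is converse pairwise Markovian to G_0, and satisfies ordered upward- and downward-stability w.r.t. G_0. If, in addition, P is V-stable, then every DAG output G(P) of a natural constraint-based structure-learning algorithm is Markov equivalent to G_0. -/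
set_option linter.unusedSectionVars false
set_option linter.unusedVariables false

open MeasureTheory ProbabilityTheory

namespace VP

section
variable {V : Type}

/-- Reachability state machine: `R A C a v s` with `s = true` iff last edge has head at `v`. -/
inductive R (A : V → V → Prop) (C : Set V) (a : V) : V → Bool → Prop
  | start : R A C a a false
  | down {v w : V} {s : Bool} : R A C a v s → v ∉ C → A v w → R A C a w true
  | up {v w : V} : R A C a v false → v ∉ C → A w v → R A C a w false
  | coll {v w : V} : R A C a v true → v ∈ C → A w v → R A C a w false

theorem R.detour {A : V → V → Prop} {C : Set V} {a v c : V} (h : Relation.TransGen A v c)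
    (hc : c ∈ C) : R A C a v true → v ∉ C → R A C a v false := by
  induction h using Relation.TransGen.head_induction_on with
  | single h => 
    intro hr hv
    exact R.coll (R.down hr hv h) hc h
  | head h _ ih =>
    rename_i u w _
    intro hr hv
    have h1 := R.down hr hv h
    by_cases hw : w ∈ C
    · exact R.coll h1 hw h
    · exact R.up (ih h1 hw) hw h

structure Rev (A A' : V → V → Prop) (x y : V) : Prop where
  xy : A x y
  yx : A' y x
  nyx : ¬ A y x
  nxy : ¬ A' x y
  nxx : ¬ A x x
  nyy : ¬ A y y
  same : ∀ u v, ¬ (u = x ∧ v = y) → ¬ (u = y ∧ v = x) → (A u v ↔ A' u v)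
  par : ∀ z, z ≠ x → z ≠ y → (A z x ↔ A z y)

theorem Rev.ne {A A' : V → V → Prop} {x y : V} (h : Rev A A' x y) : x ≠ y := by
  rintro rfl; exact h.nyx h.xy

theorem Rev.symm {A A' : V → V → Prop} {x y : V} (h : Rev A A' x y) : Rev A' A y x := by
  have hne := h.ne
  refine ⟨h.yx, h.xy, h.nxy, h.nyx, ?_, ?_, ?_, ?_⟩
  · rw [← h.same y y (by tauto) (by tauto)]; exact h.nyy
  · rw [← h.same x x (by tauto) (by tauto)]; exact h.nxx
  · intro u v h1 h2
    exact (h.same u v h2 h1).symm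
  · intro z h1 h2
    rw [← h.same z y (by tauto) (by tauto), ← h.same z x (by tauto) (by tauto)]
    exact (h.par z h2 h1).symm

/-- The simulation invariant. -/
def Inv (R' : V → Bool → Prop) (C : Set V) (x y v : V) (s : Bool) : Prop :=
  (v = x → s = true → R' x true ∧ R' y true) ∧
  (v = x → s = false → R' x false ∨ (R' y false ∧ y ∉ C) ∨ (R' x true ∧ R' y true ∧ y ∈ C)) ∧
  (v = y → s = true → (R' x true ∧ R' y true) ∨ (R' x false ∧ x ∉ C) ∨ (R' y false ∧ y ∉ C)) ∧
  (v = y → s = false → R' y false) ∧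
  (v ≠ x → v ≠ y → R' v s)

theorem Inv.other {R' : V → Bool → Prop} {C : Set V} {x y v : V} {s : Bool} (hx : v ≠ x)
    (hy : v ≠ y) (h : R' v s) : Inv R' C x y v s :=
  ⟨fun h => absurd h hx, fun h => absurd h hx, fun h => absurd h hy, fun h => absurd h hy,
    fun _ _ => h⟩

theorem Inv.yH {R' : V → Bool → Prop} {C : Set V} {x y : V} (hx : x ≠ y)
    (h : (R' x true ∧ R' y true) ∨ (R' x false ∧ x ∉ C) ∨ (R' y false ∧ y ∉ C)) :
    Inv R' C x y y true :=
  ⟨fun h => absurd h.symm hx, fun h => absurd h.symm hx, fun _ _ => h, by simp,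
    fun _ h => absurd rfl h⟩

theorem Rev.inv {A A' : V → V → Prop} {x y : V} (h : Rev A A' x y) {C : Set V} {a : V}
    {v : V} {s : Bool} (hr : R A C a v s) : Inv (R A' C a) C x y v s := by
  have hne := h.ne
  have toX : ∀ z, z ≠ x → z ≠ y → A z x → A' z x ∧ A' z y := fun z h1 h2 h3 =>
    ⟨(h.same z x (by tauto) (by tauto)).1 h3,
      (h.same z y (by tauto) (by tauto)).1 ((h.par z h1 h2).1 h3)⟩
  have toY : ∀ z, z ≠ x → z ≠ y → A z y → A' z x ∧ A' z y := fun z h1 h2 h3 =>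
    toX z h1 h2 ((h.par z h1 h2).2 h3)
  have oth : ∀ u v, (v ≠ x → v ≠ y → A u v → A' u v) := fun u v h1 h2 =>
    (h.same u v (by tauto) (by tauto)).1
  have oth' : ∀ u v, (u ≠ x → u ≠ y → A u v → A' u v) := fun u v h1 h2 =>
    (h.same u v (by tauto) (by tauto)).1
  have hyx := h.yx
  have hnyx := h.nyx
  have hnxx := h.nxx
  have hnyy := h.nyy
  induction hr with
  | start => 
    refine ⟨?_, ?_, ?_, ?_, ?_⟩
    · intro _ h; cases h
    · rintro rfl _; exact Or.inl R.start
    · intro _ h; cases h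
    · rintro rfl _; exact R.start
    · intro _ _; exact R.start
  | @down v w s hr hv hA ih =>
    obtain ⟨i1, i2, i3, i4, i5⟩ := ih
    by_cases hvx : v = x
    · subst hvx
      by_cases hwy : w = y
      · subst hwy
        refine Inv.yH hne ?_
        cases s
        · rcases i2 rfl rfl with h1 | h1 | ⟨h1, h2, h3⟩
          · exact Or.inr (Or.inl ⟨h1, hv⟩)
          · exact Or.inr (Or.inr h1)
          · exact Or.inl ⟨h1, h2⟩
        · exact Or.inl (i1 rfl rfl)
      · have hwx : w ≠ v := by rintro rfl; first | exact hnxx hA | exact hnyy hA | exact hnyx hA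
        refine Inv.other hwx hwy ?_
        have hA' := oth _ _ hwx hwy hA
        cases s
        · rcases i2 rfl rfl with h1 | ⟨h1, h2⟩ | ⟨h1, h2, h3⟩
          · exact R.down h1 hv hA'
          · exact R.down (R.down h1 h2 hyx) hv hA'
          · exact R.down h1 hv hA'
        · exact R.down (i1 rfl rfl).1 hv hA'
    · by_cases hvy : v = y
      · subst hvy
        have hwx : w ≠ x := by rintro rfl; first | exact hnxx hA | exact hnyy hA | exact hnyx hA
        have hwy : w ≠ v := by rintro rfl; first | exact hnxx hA | exact hnyy hA | exact hnyx hA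
        have hA' := oth _ _ hwx hwy hA
        refine Inv.other hwx hwy ?_
        cases s
        · exact R.down (i4 rfl rfl) hv hA'
        · rcases i3 rfl rfl with ⟨h1, h2⟩ | ⟨h1, h2⟩ | ⟨h1, h2⟩
          · exact R.down h2 hv hA'
          · exact R.down (R.up h1 h2 hyx) hv hA'
          · exact R.down h1 hv hA'
      · have h1 := i5 hvx hvy
        refine ⟨?_, by simp, ?_, by simp, fun hx hy => R.down h1 hv (oth _ _ hx hy hA)⟩
        · rintro rfl _
          exact ⟨R.down h1 hv (toX v hvx hvy hA).1, R.down h1 hv (toX v hvx hvy hA).2⟩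
        · rintro rfl _
          exact Or.inl ⟨R.down h1 hv (toY v hvx hvy hA).1, R.down h1 hv (toY v hvx hvy hA).2⟩
  | @up v w hr hv hA ih =>
    obtain ⟨i1, i2, i3, i4, i5⟩ := ih
    by_cases hvx : v = x
    · subst hvx
      have hwx : w ≠ v := by rintro rfl; first | exact hnxx hA | exact hnyy hA | exact hnyx hA
      have hwy : w ≠ y := by rintro rfl; first | exact hnxx hA | exact hnyy hA | exact hnyx hA
      refine Inv.other hwx hwy ?_
      have hA' := toX w hwx hwy hA
      rcases i2 rfl rfl with h1 | ⟨h1, h2⟩ | ⟨h1, h2, h3⟩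
      · exact R.up h1 hv hA'.1
      · exact R.up h1 h2 hA'.2
      · exact R.coll h2 h3 hA'.2
    · by_cases hvy : v = y
      · subst hvy
        have hwy : w ≠ v := by rintro rfl; first | exact hnxx hA | exact hnyy hA | exact hnyx hA
        refine ⟨by simp, ?_, by simp, fun h => absurd h hwy, fun hx hy => ?_⟩
        · rintro rfl _
          exact Or.inr (Or.inl ⟨i4 rfl rfl, hv⟩)
        · exact R.up (i4 rfl rfl) hv (toY w hx hy hA).2
      · have h1 := i5 hvx hvy
        have h2 := R.up h1 hv (oth _ _ hvx hvy hA)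
        refine ⟨by simp, ?_, by simp, ?_, fun hx hy => h2⟩
        · rintro rfl _; exact Or.inl h2
        · rintro rfl _; exact h2
  | @coll v w hr hv hA ih =>
    obtain ⟨i1, i2, i3, i4, i5⟩ := ih
    by_cases hvx : v = x
    · subst hvx
      have hwx : w ≠ v := by rintro rfl; first | exact hnxx hA | exact hnyy hA | exact hnyx hA
      have hwy : w ≠ y := by rintro rfl; first | exact hnxx hA | exact hnyy hA | exact hnyx hA
      refine Inv.other hwx hwy ?_
      exact R.coll (i1 rfl rfl).1 hv (toX w hwx hwy hA).1
    · by_cases hvy : v = y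
      · subst hvy
        have hwy : w ≠ v := by rintro rfl; first | exact hnxx hA | exact hnyy hA | exact hnyx hA
        refine ⟨by simp, ?_, by simp, fun h => absurd h hwy, fun hx hy => ?_⟩
        · rintro rfl _
          rcases i3 rfl rfl with ⟨h1, h2⟩ | ⟨h1, h2⟩ | ⟨h1, h2⟩
          · exact Or.inr (Or.inr ⟨h1, h2, hv⟩)
          · exact Or.inl h1
          · exact absurd hv h2
        · have hA' := toY w hx hy hA
          rcases i3 rfl rfl with ⟨h1, h2⟩ | ⟨h1, h2⟩ | ⟨h1, h2⟩
          · exact R.coll h2 hv hA'.2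
          · exact R.up h1 h2 hA'.1
          · exact absurd hv h2
      · have h1 := i5 hvx hvy
        have h2 := R.coll h1 hv (oth _ _ hvx hvy hA)
        refine ⟨by simp, ?_, by simp, ?_, fun hx hy => h2⟩
        · rintro rfl _; exact Or.inl h2
        · rintro rfl _; exact h2

theorem Rev.reach {A A' : V → V → Prop} {x y : V} (h : Rev A A' x y) {C : Set V} {a b : V}
    (hr : ∃ s, R A C a b s) : ∃ s, R A' C a b s := by
  obtain ⟨s, hr⟩ := hr
  obtain ⟨i1, i2, i3, i4, i5⟩ := h.inv hr
  by_cases hbx : b = x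
  · subst hbx
    cases s
    · rcases i2 rfl rfl with h1 | ⟨h1, h2⟩ | ⟨h1, h2, h3⟩
      · exact ⟨_, h1⟩
      · exact ⟨_, R.down h1 h2 h.yx⟩
      · exact ⟨_, h1⟩
    · exact ⟨_, (i1 rfl rfl).1⟩
  · by_cases hby : b = y
    · subst hby
      cases s
      · exact ⟨_, i4 rfl rfl⟩
      · rcases i3 rfl rfl with ⟨h1, h2⟩ | ⟨h1, h2⟩ | ⟨h1, h2⟩
        · exact ⟨_, h2⟩
        · exact ⟨_, R.up h1 h2 h.yx⟩
        · exact ⟨_, h1⟩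
    · exact ⟨_, i5 hbx hby⟩

theorem Rev.reach_iff {A A' : V → V → Prop} {x y : V} (h : Rev A A' x y) {C : Set V} {a b : V} :
    (∃ s, R A C a b s) ↔ ∃ s, R A' C a b s := ⟨h.reach, h.symm.reach⟩

/-- Same skeleton and unshielded colliders. -/
structure Equ (A B : V → V → Prop) : Prop where
  sk : ∀ u v, (A u v ∨ A v u) ↔ (B u v ∨ B v u)
  col : ∀ u v w, u ≠ w → ¬ (A u w ∨ A w u) → ((A u v ∧ A w v) ↔ (B u v ∧ B w v))

theorem wf_of_acyclic [Finite V] {A : V → V → Prop} (h : ∀ i, ¬ Relation.TransGen A i i) :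
    WellFounded (Relation.TransGen A) := by
  have : Std.Irrefl (Relation.TransGen A) := ⟨h⟩
  have : IsTrans V (Relation.TransGen A) := ⟨fun _ _ _ => Relation.TransGen.trans⟩
  exact Finite.wellFounded_of_trans_of_irrefl _

theorem wf_of_acyclic' [Finite V] {A : V → V → Prop} (h : ∀ i, ¬ Relation.TransGen A i i) :
    WellFounded (fun u v => Relation.TransGen A v u) := by
  have : Std.Irrefl (fun u v => Relation.TransGen A v u) := ⟨h⟩
  have : IsTrans V (fun u v => Relation.TransGen A v u) := ⟨fun _ _ _ h1 h2 => h2.trans h1⟩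
  exact Finite.wellFounded_of_trans_of_irrefl _

theorem exists_covered [Finite V] {A B : V → V → Prop} (hA : ∀ i, ¬ Relation.TransGen A i i)
    (hB : ∀ i, ¬ Relation.TransGen B i i) (e : Equ A B) (hD : ∃ x y, A x y ∧ B y x) :
    ∃ x y, A x y ∧ B y x ∧ ∀ z, z ≠ x → z ≠ y → (A z x ↔ A z y) := by
  obtain ⟨x0, y0, hD⟩ := hD
  obtain ⟨y, ⟨x1, hx1⟩, hymin⟩ := (wf_of_acyclic hA).has_min {y | ∃ x, A x y ∧ B y x} ⟨y0, x0, hD⟩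
  obtain ⟨x, ⟨hxy, hyx⟩, hxmax⟩ := (wf_of_acyclic' hA).has_min {x | A x y ∧ B y x} ⟨x1, hx1⟩
  refine ⟨x, y, hxy, hyx, fun z hzx hzy => ⟨fun h => ?_, fun h => ?_⟩⟩
  · by_contra hn
    have hnyz : ¬ A y z := fun h' => hA x ((Relation.TransGen.single hxy).tail h' |>.tail h)
    have hc := e.col z x y hzy (by tauto)
    have hnBzx : ¬ B z x := by
      intro h'
      have := hc.2 ⟨h', hyx⟩
      exact hA x ((Relation.TransGen.single hxy).tail this.2)
    have : B x z := by
      have := (e.sk z x).1 (Or.inl h)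
      tauto
    exact hymin x ⟨z, h, this⟩ (.single hxy)
  · by_contra hn
    have hBxy : ¬ B x y := fun h' => hB x ((Relation.TransGen.single h').tail hyx)
    by_cases hxz : A x z
    · have h1 : ¬ B y z := fun h' => hxmax z ⟨h, h'⟩ (.single hxz)
      have h2 : B z y := by
        have := (e.sk z y).1 (Or.inl h)
        tauto
      have h3 : B z x := by
        have := (e.sk x z).1 (Or.inl hxz)
        rcases this with h' | h'
        · exact (hB x (((Relation.TransGen.single h').tail h2).tail hyx)).elim
        · exact h'
      exact hymin z ⟨x, hxz, h3⟩ (.single h)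
    · exact hBxy ((e.col z y x hzx (by tauto)).1 ⟨h, hxy⟩).2

/-- reverse the edge `x → y`. -/
def rev (A : V → V → Prop) (x y u v : V) : Prop := (A u v ∧ ¬ (u = x ∧ v = y)) ∨ (u = y ∧ v = x)

theorem rev_Rev {A : V → V → Prop} (hA : ∀ i, ¬ Relation.TransGen A i i) {x y : V} (hxy : A x y)
    (hc : ∀ z, z ≠ x → z ≠ y → (A z x ↔ A z y)) : Rev A (rev A x y) x y := by
  have hne : x ≠ y := by rintro rfl; exact hA _ (.single hxy)
  refine ⟨hxy, Or.inr ⟨rfl, rfl⟩, fun h => hA x ((Relation.TransGen.single hxy).tail h), ?_,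
    fun h => hA _ (.single h), fun h => hA _ (.single h), ?_, hc⟩
  · unfold rev; tauto
  · intro u v h1 h2; unfold rev; tauto

theorem rev_acyclic {A : V → V → Prop} (hA : ∀ i, ¬ Relation.TransGen A i i) {x y : V} (hxy : A x y)
    (hc : ∀ z, z ≠ x → z ≠ y → (A z x ↔ A z y)) : ∀ i, ¬ Relation.TransGen (rev A x y) i i := by
  have hne : x ≠ y := by rintro rfl; exact hA _ (.single hxy)
  -- any walk in the new graph either is old, or factors
  set A0 : V → V → Prop := fun u v => A u v ∧ ¬ (u = x ∧ v = y) with hA0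
  have key : ∀ u v, Relation.TransGen (rev A x y) u v →
      Relation.TransGen A0 u v ∨
        (Relation.ReflTransGen A0 u y ∧ Relation.ReflTransGen A0 x v) ∨
        Relation.TransGen A0 x y ∨ Relation.ReflTransGen A0 x y := by
    intro u v h
    induction h with
    | single h =>
      rcases h with h | ⟨rfl, rfl⟩
      · exact Or.inl (.single h)
      · exact Or.inr (Or.inl ⟨.refl, .refl⟩)
    | tail _ h ih =>
      rcases ih with ih | ⟨i1, i2⟩ | ih
      · rcases h with h | ⟨rfl, rfl⟩
        · exact Or.inl (ih.tail h)
        · exact Or.inr (Or.inl ⟨ih.to_reflTransGen, .refl⟩)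
      · rcases h with h | ⟨rfl, rfl⟩
        · exact Or.inr (Or.inl ⟨i1, i2.tail h⟩)
        · exact Or.inr (Or.inr (Or.inr i2))
      · exact Or.inr (Or.inr ih)
  have mono : ∀ u v, Relation.TransGen A0 u v → Relation.TransGen A u v :=
    fun u v h => Relation.TransGen.mono (fun _ _ (h : A0 _ _) => h.1) _ _ h
  have noxy : ¬ Relation.TransGen A0 x y := by
    intro h
    obtain ⟨z, h1, h2, h3⟩ := Relation.TransGen.tail'_iff.1 h
    have hzx : z ≠ x := fun h' => h3 ⟨h', rfl⟩
    have hzy : z ≠ y := by rintro rfl; exact hA _ (.single h2)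
    have h4 := (hc z hzx hzy).2 h2
    have h5 : Relation.ReflTransGen A x z := Relation.ReflTransGen.mono (fun _ _ (h : A0 _ _) => h.1) _ _ h1
    exact hA x (Relation.TransGen.tail' h5 h4)
  have noxy' : ¬ Relation.ReflTransGen A0 x y := by
    intro h
    rcases Relation.reflTransGen_iff_eq_or_transGen.1 h with h | h
    · exact hne h.symm
    · exact noxy h
  intro i h
  rcases key i i h with h | ⟨h1, h2⟩ | h | h
  · exact hA i (mono _ _ h)
  · exact noxy' (h2.trans h1)
  · exact noxy h
  · exact noxy' h

theorem equ_reach [Finite V] {B : V → V → Prop} (hB : ∀ i, ¬ Relation.TransGen B i i) :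
    ∀ (n : ℕ) (A : V → V → Prop), {p : V × V | A p.1 p.2 ∧ B p.2 p.1}.ncard = n →
    (∀ i, ¬ Relation.TransGen A i i) → Equ A B → ∀ (C : Set V) (a b : V),
    ((∃ s, R A C a b s) ↔ ∃ s, R B C a b s) := by
  intro n
  induction n using Nat.strong_induction_on with
  | _ n ih =>
  intro A hn hA e C a b
  have hAas : ∀ u v, A u v → ¬ A v u := fun u v h1 h2 => hA u ((Relation.TransGen.single h1).tail h2)
  have hBas : ∀ u v, B u v → ¬ B v u := fun u v h1 h2 => hB u ((Relation.TransGen.single h1).tail h2)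
  by_cases hD : ∃ x y, A x y ∧ B y x
  · obtain ⟨x, y, hxy, hyx, hc⟩ := exists_covered hA hB e hD
    have hR := rev_Rev hA hxy hc
    have hne := hR.ne
    rw [hR.reach_iff]
    have adj' : ∀ u v, (rev A x y u v ∨ rev A x y v u) ↔ (A u v ∨ A v u) := by
      intro u v
      by_cases h1 : u = x ∧ v = y
      · obtain ⟨rfl, rfl⟩ := h1; unfold rev; tauto
      · by_cases h2 : u = y ∧ v = x
        · obtain ⟨rfl, rfl⟩ := h2; unfold rev; tauto
        · unfold rev; tauto
    refine ih _ ?_ (rev A x y) rfl (rev_acyclic hA hxy hc) ⟨?_, ?_⟩ C a b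
    · rw [← hn]
      apply Set.ncard_lt_ncard _ (Set.toFinite _)
      refine ⟨?_, fun h => ?_⟩
      · rintro ⟨u, v⟩ ⟨h1, h2⟩
        rcases h1 with h1 | ⟨h3, h4⟩
        · exact ⟨h1.1, h2⟩
        · simp only at h2 h3 h4
          subst h3 h4
          exact (hBas _ _ h2 hyx).elim
      · have := h (show (x, y) ∈ {p : V × V | A p.1 p.2 ∧ B p.2 p.1} from ⟨hxy, hyx⟩)
        exact hR.nxy this.1
    · intro u v
      rw [← e.sk, adj']
    · intro u v w huw hnadj
      rw [adj'] at hnadj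
      rw [← e.col u v w huw hnadj]
      by_cases hvx : v = x
      · subst hvx
        by_cases hu : u = y
        · subst hu
          have := hc w
          have := hAas _ _ hxy
          have : w ≠ v := by rintro rfl; tauto
          unfold rev; tauto
        · by_cases hw : w = y
          · subst hw
            have := hc u
            have := hAas _ _ hxy
            have : u ≠ v := by rintro rfl; tauto
            unfold rev; tauto
          · unfold rev; tauto
      · by_cases hvy : v = y
        · subst hvy
          by_cases hu : u = x
          · subst hu
            have := hc w
            have : A w v → w ≠ v := by rintro h rfl; exact hAas _ _ h h
            unfold rev; tauto
          · by_cases hw : w = x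
            · subst hw
              have := hc u
              have : A u v → u ≠ v := by rintro h rfl; exact hAas _ _ h h
              unfold rev; tauto
            · unfold rev; tauto
        · unfold rev; tauto
  · have : A = B := by
      funext u v
      apply propext
      have := e.sk u v
      have h1 : ¬ (A u v ∧ B v u) := fun h => hD ⟨_, _, h⟩
      have h2 : ¬ (A v u ∧ B u v) := fun h => hD ⟨_, _, h⟩
      have h3 := hAas u v
      have h4 := hBas u v
      tauto
    rw [this]

/-- Weak walks. -/
structure W (A : V → V → Prop) (C : Set V) (n : ℕ) (w : ℕ → V) : Prop where
  adj : ∀ t, t < n → A (w t) (w (t+1)) ∨ A (w (t+1)) (w t)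
  col : ∀ t, 0 < t → t < n → A (w (t-1)) (w t) → A (w (t+1)) (w t) →
    w t ∈ C ∨ ∃ c ∈ C, Relation.TransGen A (w t) c
  ncol : ∀ t, 0 < t → t < n → ¬ (A (w (t-1)) (w t) ∧ A (w (t+1)) (w t)) → w t ∉ C

theorem W.reach {A : V → V → Prop} (hA : ∀ i, ¬ Relation.TransGen A i i) {C : Set V} {n : ℕ}
    {w : ℕ → V} (h : W A C n w) (ha : w 0 ∉ C) : ∃ s, R A C (w 0) (w n) s := by
  have hAas : ∀ u v, A u v → ¬ A v u := fun u v h1 h2 => hA u ((Relation.TransGen.single h1).tail h2)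
  have key : ∀ t, t ≤ n → ∃ s, R A C (w 0) (w t) s ∧
      (0 < t → (s = true → A (w (t-1)) (w t)) ∧ (s = false → A (w t) (w (t-1)))) := by
    intro t
    induction t with
    | zero => intro _; exact ⟨false, R.start, by simp⟩
    | succ t ih =>
      intro ht
      obtain ⟨s, hs, hst⟩ := ih (by omega)
      rcases Nat.eq_zero_or_pos t with rfl | hpos
      · rcases h.adj 0 (by omega) with h1 | h1
        · exact ⟨true, R.down R.start ha h1, by simpa using h1⟩
        · exact ⟨false, R.up R.start ha h1, by simpa using h1⟩
      · obtain ⟨hs1, hs2⟩ := hst hpos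
        have hcol := h.col t hpos (by omega)
        have hncol := h.ncol t hpos (by omega)
        rcases h.adj t (by omega) with h1 | h1
        · refine ⟨true, R.down hs (hncol fun h2 => hAas _ _ h1 h2.2) h1, by simpa using h1⟩
        · refine ⟨false, ?_, by simpa using h1⟩
          cases s
          · exact R.up hs (hncol fun h2 => hAas _ _ h2.1 (hs2 rfl)) h1
          · by_cases hC : w t ∈ C
            · exact R.coll hs hC h1
            · rcases hcol (hs1 rfl) h1 with h2 | ⟨c, hc, h2⟩
              · exact absurd h2 hC
              · exact R.up (R.detour h2 hc hs hC) hC h1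
  obtain ⟨s, hs, _⟩ := key n le_rfl
  exact ⟨s, hs⟩

theorem W.extend {A : V → V → Prop} {C : Set V} {n : ℕ} {w : ℕ → V} (h : W A C n w) (u : V)
    (hadj : A (w n) u ∨ A u (w n))
    (hc : 0 < n → A (w (n-1)) (w n) → A u (w n) → w n ∈ C)
    (hnc : 0 < n → ¬ (A (w (n-1)) (w n) ∧ A u (w n)) → w n ∉ C) :
    W A C (n+1) (fun k => if k ≤ n then w k else u) := by
  refine ⟨?_, ?_, ?_⟩
  · intro t ht
    by_cases h1 : t + 1 ≤ n
    · simpa [h1, show t ≤ n by omega] using h.adj t (by omega)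
    · obtain rfl : t = n := by omega
      simpa using hadj
  · intro t h0 ht
    by_cases h1 : t + 1 ≤ n
    · simpa [h1, show t ≤ n by omega, show t - 1 ≤ n by omega] using h.col t h0 (by omega)
    · obtain rfl : t = n := by omega
      simp only [le_refl, if_true, show t - 1 ≤ t by omega, h1, if_false]
      intro h2 h3
      exact Or.inl (hc h0 h2 h3)
  · intro t h0 ht
    by_cases h1 : t + 1 ≤ n
    · simpa [h1, show t ≤ n by omega, show t - 1 ≤ n by omega] using h.ncol t h0 (by omega)
    · obtain rfl : t = n := by omega
      simp only [le_refl, if_true, show t - 1 ≤ t by omega, h1, if_false]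
      exact hnc h0

theorem R.walk {A : V → V → Prop} (hA : ∀ i, ¬ Relation.TransGen A i i) {C : Set V} {a v : V}
    {s : Bool} (hr : R A C a v s) : ∃ n w, W A C n w ∧ w 0 = a ∧ w n = v ∧
      (s = true → 0 < n ∧ A (w (n-1)) (w n)) ∧ (s = false → 0 < n → A (w n) (w (n-1))) := by
  have hAas : ∀ u v, A u v → ¬ A v u := fun u v h1 h2 => hA u ((Relation.TransGen.single h1).tail h2)
  induction hr with
  | start => exact ⟨0, fun _ => a, ⟨by omega, by omega, by omega⟩, rfl, rfl, by simp, by simp⟩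
  | @down v u s hr hv h ih =>
    obtain ⟨n, w, hw, h0, rfl, h1, h2⟩ := ih
    refine ⟨n+1, _, hw.extend u (Or.inl h) (fun _ _ h3 => (hAas _ _ h h3).elim) (fun _ _ => hv),
      by simpa using h0, by simp, by simpa using h, by simp⟩
  | @up v u hr hv h ih =>
    obtain ⟨n, w, hw, h0, rfl, h1, h2⟩ := ih
    refine ⟨n+1, _, hw.extend u (Or.inr h) (fun h3 h4 _ => (hAas _ _ h4 (h2 rfl h3)).elim)
      (fun _ _ => hv), by simpa using h0, by simp, by simp, by simpa using h⟩
  | @coll v u hr hv h ih =>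
    obtain ⟨n, w, hw, h0, rfl, h1, h2⟩ := ih
    refine ⟨n+1, _, hw.extend u (Or.inr h) (fun _ _ _ => hv)
      (fun _ h3 => (h3 ⟨(h1 rfl).2, h⟩).elim), by simpa using h0, by simp, by simp, by simpa using h⟩

/-- Following a walk out of a node by a tail. -/
theorem W.follow {A : V → V → Prop} {C : Set V} {n : ℕ} {w : ℕ → V} (h : W A C n w) (s : ℕ)
    (hs : A (w s) (w (s+1))) : ∀ d, s + 1 + d ≤ n →
      (∃ c ∈ C, Relation.TransGen A (w s) c) ∨
      (Relation.TransGen A (w s) (w (s+1+d)) ∧ A (w (s+d)) (w (s+1+d))) := by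
  intro d
  induction d with
  | zero => intro _; exact Or.inr ⟨.single hs, hs⟩
  | succ d ih =>
    intro hd
    rcases ih (by omega) with h1 | ⟨h1, h2⟩
    · exact Or.inl h1
    · rcases h.adj (s+1+d) (by omega) with h3 | h3
      · exact Or.inr ⟨h1.tail h3, by rw [show s + (d+1) = s+1+d by omega]; exact h3⟩
      · left
        have := h.col (s+1+d) (by omega) (by omega)
          (by rw [show s + 1 + d - 1 = s + d by omega]; exact h2) h3
        rcases this with h4 | ⟨c, hc, h4⟩
        · exact ⟨_, h4, h1⟩
        · exact ⟨c, hc, h1.trans h4⟩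

theorem W.cut {A : V → V → Prop} (hA : ∀ i, ¬ Relation.TransGen A i i) {C : Set V} {n : ℕ}
    {w : ℕ → V} (h : W A C n w) {s t : ℕ} (hst : s < t) (htn : t ≤ n) (he : w s = w t) :
    W A C (n - (t - s)) (fun k => if k ≤ s then w k else w (k + (t - s))) := by
  have hAas : ∀ u v, A u v → ¬ A v u := fun u v h1 h2 => hA u ((Relation.TransGen.single h1).tail h2)
  refine ⟨?_, ?_, ?_⟩
  · intro k hk
    rcases lt_trichotomy k s with h1 | rfl | h1
    · simpa [show k ≤ s by omega, show k + 1 ≤ s by omega] using h.adj k (by omega)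
    · have := h.adj t (by omega)
      simp only [le_refl, if_true, show ¬ (k + 1 ≤ k) by omega, if_false, he,
        show k + 1 + (t - k) = t + 1 by omega]
      exact this
    · simp only [show ¬ (k ≤ s) by omega, show ¬ (k + 1 ≤ s) by omega, if_false,
        show k + 1 + (t - s) = k + (t - s) + 1 by omega]
      exact h.adj _ (by omega)
  · intro k h0 hk
    rcases lt_trichotomy k s with h1 | rfl | h1
    · simpa [show k ≤ s by omega, show k + 1 ≤ s by omega, show k - 1 ≤ s by omega]
        using h.col k h0 (by omega)
    · simp only [le_refl, if_true, show ¬ (k + 1 ≤ k) by omega, if_false, show k - 1 ≤ k by omega,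
        show k + 1 + (t - k) = t + 1 by omega]
      intro h2 h3
      rcases h.adj k (by omega) with h4 | h4
      · right
        rcases h.follow k h4 (t - (k+1)) (by omega) with h5 | ⟨h5, _⟩
        · exact h5
        · rw [show k + 1 + (t - (k+1)) = t by omega, ← he] at h5
          exact (hA _ h5).elim
      · exact h.col k h0 (by omega) h2 h4
    · by_cases h2 : k = s + 1
      · subst h2
        simp only [show ¬ (s + 1 ≤ s) by omega, show ¬ (s + 1 + 1 ≤ s) by omega, if_false,
          show s + 1 - 1 = s by omega, le_refl, if_true, he, show s + 1 + (t - s) = t + 1 by omega,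
          show s + 1 + 1 + (t - s) = t + 1 + 1 by omega]
        exact h.col (t+1) (by omega) (by omega)
      · simp only [show ¬ (k ≤ s) by omega, show ¬ (k + 1 ≤ s) by omega, if_false,
          show ¬ (k - 1 ≤ s) by omega,
          show k + 1 + (t - s) = k + (t - s) + 1 by omega,
          show k - 1 + (t - s) = k + (t - s) - 1 by omega]
        exact h.col _ (by omega) (by omega)
  · intro k h0 hk
    rcases lt_trichotomy k s with h1 | rfl | h1
    · simpa [show k ≤ s by omega, show k + 1 ≤ s by omega, show k - 1 ≤ s by omega]
        using h.ncol k h0 (by omega)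
    · simp only [le_refl, if_true, show ¬ (k + 1 ≤ k) by omega, if_false, show k - 1 ≤ k by omega,
        show k + 1 + (t - k) = t + 1 by omega]
      intro h2
      by_cases h3 : A (w (k-1)) (w k)
      · have h4 : ¬ A (w (t+1)) (w t) := fun h4 => h2 ⟨h3, he ▸ h4⟩
        rw [he]
        exact h.ncol t (by omega) (by omega) (fun h5 => h4 h5.2)
      · exact h.ncol k h0 (by omega) (fun h5 => h3 h5.1)
    · by_cases h2 : k = s + 1
      · subst h2
        simp only [show ¬ (s + 1 ≤ s) by omega, show ¬ (s + 1 + 1 ≤ s) by omega, if_false,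
          show s + 1 - 1 = s by omega, le_refl, if_true, he, show s + 1 + (t - s) = t + 1 by omega,
          show s + 1 + 1 + (t - s) = t + 1 + 1 by omega]
        exact h.ncol (t+1) (by omega) (by omega)
      · simp only [show ¬ (k ≤ s) by omega, show ¬ (k + 1 ≤ s) by omega, if_false,
          show ¬ (k - 1 ≤ s) by omega,
          show k + 1 + (t - s) = k + (t - s) + 1 by omega,
          show k - 1 + (t - s) = k + (t - s) - 1 by omega]
        exact h.ncol _ (by omega) (by omega)

theorem W.path {A : V → V → Prop} (hA : ∀ i, ¬ Relation.TransGen A i i) {C : Set V} {a b : V} :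
    ∀ (n : ℕ) (w : ℕ → V), W A C n w → w 0 = a → w n = b →
    ∃ n w, W A C n w ∧ w 0 = a ∧ w n = b ∧ ∀ s t, s < t → t ≤ n → w s ≠ w t := by
  intro n
  induction n using Nat.strong_induction_on with
  | _ n ih =>
  intro w h h0 hn
  by_cases hinj : ∀ s t, s < t → t ≤ n → w s ≠ w t
  · exact ⟨n, w, h, h0, hn, hinj⟩
  · push Not at hinj
    obtain ⟨s, t, hst, htn, he⟩ := hinj
    refine ih (n - (t - s)) (by omega) _ (h.cut hA hst htn he) (by simpa using h0) ?_
    by_cases h1 : t = n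
    · subst h1
      simp only [show t - (t - s) = s by omega, le_refl, if_true]
      rw [he, hn]
    · simp only [show ¬ (n - (t - s) ≤ s) by omega, if_false, show n - (t - s) + (t - s) = n by omega]
      exact hn

theorem connecting_iff {G : MixedGraph V} (hG : G.IsDAG) {C : Set V} {a b : V} (ha : a ∉ C) :
    (∃ p : List V, G.Connecting C p ∧ p.head? = some a ∧ p.getLast? = some b) ↔
      ∃ s, R G.arrow C a b s := by
  obtain ⟨harc, hac⟩ := hG
  have hA : ∀ i, ¬ Relation.TransGen G.arrow i i := hac
  constructor
  · rintro ⟨p, ⟨hnd, hch, hcon⟩, h0, hl⟩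
    have hpos : 0 < p.length := by
      rcases p with _ | _
      · simp at h0
      · simp
    have hw : W G.arrow C (p.length - 1) (fun t => p.getD t a) := by
      refine ⟨?_, ?_, ?_⟩
      · intro t ht
        have := List.isChain_iff_getElem.1 hch t (by omega)
        simp only [MixedGraph.adj, harc, or_false] at this
        simpa [List.getD_eq_getElem?_getD, show t < p.length by omega,
          show t + 1 < p.length by omega] using this
      · intro t h1 h2
        have := (hcon t h1 (by omega) (by omega) (by omega)).1
        simp only [MixedGraph.collider, MixedGraph.headInto, harc, or_false] at this
        intro h3 h4
        simp only [List.getD_eq_getElem?_getD, show t < p.length by omega, getElem?_pos,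
          show t - 1 < p.length by omega,
          show t + 1 < p.length by omega, Option.getD_some] at h3 h4 ⊢
        exact this ⟨h3, h4⟩
      · intro t h1 h2
        have := (hcon t h1 (by omega) (by omega) (by omega)).2
        simp only [MixedGraph.collider, MixedGraph.headInto, harc, or_false] at this
        intro h3
        simp only [List.getD_eq_getElem?_getD, show t < p.length by omega, getElem?_pos,
          show t - 1 < p.length by omega,
          show t + 1 < p.length by omega, Option.getD_some] at h3 ⊢
        exact this h3
    have e0 : p.getD 0 a = a := by
      rw [List.head?_eq_getElem?] at h0
      simp [List.getD_eq_getElem?_getD, h0]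
    have e1 : p.getD (p.length - 1) a = b := by
      rw [List.getLast?_eq_getElem?] at hl
      simp [List.getD_eq_getElem?_getD, hl]
    have := hw.reach hA (by simpa only [e0] using ha)
    simpa only [e0, e1] using this
  · rintro ⟨s, hs⟩
    obtain ⟨n, w, hw, h0, hn, -⟩ := hs.walk hA
    obtain ⟨n, w, hw, h0, hn, hinj⟩ := W.path hA n w hw h0 hn
    refine ⟨List.ofFn (fun i : Fin (n+1) => w i), ⟨?_, ?_, ?_⟩, ?_, ?_⟩
    · rw [List.nodup_ofFn]
      intro i j hij
      by_contra hne
      rcases lt_or_gt_of_ne hne with h | h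
      · exact hinj i j h (by omega) hij
      · exact hinj j i h (by omega) hij.symm
    · refine List.isChain_iff_getElem.2 ?_
      intro t ht
      simp only [List.length_ofFn] at ht
      simp only [List.getElem_ofFn, MixedGraph.adj, harc, or_false]
      exact hw.adj t (by omega)
    · intro t ht h1 h2 h3
      simp only [List.length_ofFn] at h1 h2 h3
      simp only [List.get_eq_getElem, List.getElem_ofFn, MixedGraph.collider, MixedGraph.headInto,
        harc, or_false]
      exact ⟨fun h => hw.col t ht (by omega) h.1 h.2, hw.ncol t ht (by omega)⟩
    · simp [List.head?_eq_getElem?, h0]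
    · rw [List.getLast?_eq_getElem?, List.length_ofFn, List.getElem?_ofFn]
      simp [hn]

theorem markovEquiv_of_equ [Finite V] {G H : MixedGraph V} (hG : G.IsDAG) (hH : H.IsDAG)
    (e : Equ G.arrow H.arrow) : G.MarkovEquiv H := by
  intro A B C hAB hAC hBC
  have key : ∀ {K : MixedGraph V}, K.IsDAG → (K.mSep A B C ↔
      ¬ ∃ a ∈ A, ∃ b ∈ B, ∃ s, R K.arrow C a b s) := by
    intro K hK
    unfold MixedGraph.mSep
    refine not_congr ⟨?_, ?_⟩
    · rintro ⟨p, hp, ⟨a, ha, h0⟩, ⟨b, hb, h1⟩⟩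
      exact ⟨a, ha, b, hb, (connecting_iff hK (Set.disjoint_left.1 hAC ha)).1 ⟨p, hp, h0, h1⟩⟩
    · rintro ⟨a, ha, b, hb, h⟩
      obtain ⟨p, hp, h0, h1⟩ := (connecting_iff hK (Set.disjoint_left.1 hAC ha)).2 h
      exact ⟨p, hp, ⟨a, ha, h0⟩, ⟨b, hb, h1⟩⟩
  rw [key hG, key hH]
  simp only [equ_reach hH.2 _ _ rfl hG.2 e]

theorem ci_anSet [Finite V] {G : MixedGraph V} (hG : G.IsDAG) {ci : V → V → Set V → Prop}
    (hup : UpStab G.minLt ci) (hdown : DownStab G.minLt ci) {i j : V} (hij : i ≠ j) {C : Set V}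
    (hi : i ∉ C) (hj : j ∉ C) (h : ci i j C) : ci i j (G.anSet i j) := by
  have hiS : i ∉ G.anSet i j := fun h => h.2.1 rfl
  have hjS : j ∉ G.anSet i j := fun h => h.2.2 rfl
  have up : ∀ S : Set V, S ⊆ G.anSet i j → ci i j (C ∪ S) := by
    intro S
    induction S, Set.toFinite S using Set.Finite.induction_on with
    | empty => intro _; simpa using h
    | @insert k S _ _ ih =>
      intro hS
      have hk := hS (Set.mem_insert k S)
      have hS' := (Set.subset_insert k S).trans hS
      have := hup i j (C ∪ S) hij (by rintro (h | h); exacts [hi h, hiS (hS' h)])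
        (by rintro (h | h); exacts [hj h, hjS (hS' h)]) (ih hS') k hk.2.1 hk.2.2 hk.1
      rwa [Set.union_assoc, Set.union_singleton] at this
  have down : ∀ (n : ℕ) (D : Set V), (D \ G.anSet i j).ncard = n → G.anSet i j ⊆ D → i ∉ D → j ∉ D →
      ci i j D → ci i j (G.anSet i j) := by
    intro n
    induction n with
    | zero =>
      intro D hD hsub _ _ hc
      rw [Set.ncard_eq_zero] at hD
      rwa [hsub.antisymm (Set.sdiff_eq_empty.1 hD)]
    | succ n ih =>
      intro D hD hsub hiD hjD hc
      have hne : (D \ G.anSet i j).Nonempty := by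
        rw [← Set.ncard_pos]; omega
      obtain ⟨k, hk, hmin⟩ := (wf_of_acyclic' hG.2).has_min _ hne
      have hki : k ≠ i := fun h => hiD (h ▸ hk.1)
      have hkj : k ≠ j := fun h => hjD (h ▸ hk.1)
      have n1 : ¬ G.anc k i := fun h => hk.2 ⟨Or.inl h, hki, hkj⟩
      have n2 : ¬ G.anc k j := fun h => hk.2 ⟨Or.inr h, hki, hkj⟩
      have hc' := hdown i j D hij hiD hjD hc k n1 n2 (by
        intro l hl hkl
        by_cases hlS : l ∈ G.anSet i j
        · rcases hlS.1 with h1 | h1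
          · exact n1 (Relation.TransGen.trans hkl h1)
          · exact n2 (Relation.TransGen.trans hkl h1)
        · exact hmin l ⟨hl.1, hlS⟩ hkl)
      refine ih (D \ {k}) ?_ ?_ (fun h => hiD h.1) (fun h => hjD h.1) hc'
      · have : (D \ {k}) \ G.anSet i j = (D \ G.anSet i j) \ {k} := by
          ext z; simp only [Set.mem_sdiff]; tauto
        rw [this, Set.ncard_sdiff_singleton_of_mem hk, hD]; rfl
      · intro z hz
        refine ⟨hsub hz, fun h => ?_⟩
        rw [Set.mem_singleton_iff] at h
        exact hk.2 (h ▸ hz)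
  exact down _ (C ∪ G.anSet i j) rfl Set.subset_union_right
    (by rintro (h | h); exacts [hi h, hiS h]) (by rintro (h | h); exacts [hj h, hjS h])
    (up _ subset_rfl)

/-- unshielded colliders are determined by `ci`. -/
theorem collider_iff [Finite V] {G : MixedGraph V} (hG : G.IsDAG) {ci : V → V → Set V → Prop}
    (hsk : ∀ i j, G.adj i j ↔ skP ci i j) (hvs : VStable ci)
    (hup : UpStab G.minLt ci) (hdown : DownStab G.minLt ci) {i k j : V} (hij : i ≠ j)
    (hik : G.adj i k) (hkj : G.adj k j) (hnij : ¬ G.adj i j) :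
    (G.arrow i k ∧ G.arrow j k) ↔ ∃ C : Set V, i ∉ C ∧ j ∉ C ∧ k ∉ C ∧ ci i j C := by
  constructor
  · rintro ⟨h1, h2⟩
    rw [hsk] at hnij
    unfold skP at hnij
    push Not at hnij
    obtain ⟨C, hi, hj, hc⟩ := hnij hij
    refine ⟨G.anSet i j, fun h => h.2.1 rfl, fun h => h.2.2 rfl, ?_, ci_anSet hG hup hdown hij hi hj hc⟩
    rintro ⟨h | h, -⟩
    · exact hG.2 k (Relation.TransGen.tail h h1)
    · exact hG.2 k (Relation.TransGen.tail h h2)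
  · rintro ⟨C, hi, hj, hk, hc⟩
    by_contra hn
    have hanc : G.anc k i ∨ G.anc k j := by
      have h1 := hik
      have h2 := hkj
      simp only [MixedGraph.adj, hG.1, or_false] at h1 h2
      have : G.arrow k i ∨ G.arrow k j := by tauto
      exact this.imp .single .single
    have hs1 := (hsk _ _).1 hik
    have hs2 := (hsk _ _).1 hkj
    exact hvs ⟨i, k, j, C, hij, hs1.1, hs2.1.symm, hs1, hs2, fun h => hnij ((hsk _ _).2 h), hi, hj, hk,
      hc, hup i j C hij hi hj hc k hs1.1.symm hs2.1 hanc⟩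

end

end VP

/-- Theorem 18(b) of Sadeghi–Soo. -/
theorem statement_12 {V : Type} [Fintype V]
    {Ω : Type} [MeasurableSpace Ω] [StandardBorelSpace Ω] [Nonempty Ω]
    (μ : Measure Ω) [IsProbabilityMeasure μ]
    {𝓧 : V → Type} [∀ v, MeasurableSpace (𝓧 v)]
    (X : ∀ v, Ω → 𝓧 v) (hX : ∀ v, Measurable (X v))
    (G0 : MixedGraph V) (hdag : G0.IsDAG) (hmax : G0.Maximal)
    (hMark : Markovian μ X hX G0)
    (hconv : ConvPairwiseMarkov μ X hX G0)
    (hup : UpStab G0.minLt (ciP μ X hX)) (hdown : DownStab G0.minLt (ciP μ X hX))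
    (hvs : VStable (ciP μ X hX)) :
    ∀ H : MixedGraph V, NaturalOutput (ciP μ X hX) H → H.IsDAG →
      H.MarkovEquiv G0 := by
  intro H hH hHdag
  obtain ⟨hHsk, lt, -, -, -, -, hlt, hup', hdown'⟩ := hH
  obtain rfl : lt = H.minLt := by
    funext a b; exact propext (hlt a b)
  have hGsk : ∀ i j, G0.adj i j ↔ skP (ciP μ X hX) i j := by
    intro i j
    constructor
    · intro hadj
      have hij : i ≠ j := by
        rintro rfl
        simp only [MixedGraph.adj, hdag.1, or_false, or_self] at hadj
        exact hdag.2 i (.single hadj)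
      refine ⟨hij, ?_⟩
      rintro ⟨C, hi, hj, hc⟩
      exact hconv i j hij (VP.ci_anSet hdag hup hdown hij hi hj hc) hadj
    · rintro ⟨hij, hn⟩
      by_contra hna
      obtain ⟨C, hi, hj, hs⟩ := hmax i j hij hna
      exact hn ⟨C, hi, hj, hMark {i} {j} C (by simpa using hij) (by simpa using hi)
        (by simpa using hj) hs⟩
  have hadj : ∀ i j, H.adj i j ↔ G0.adj i j := fun i j => (hHsk i j).trans (hGsk i j).symm
  have hsk : ∀ u v, (H.arrow u v ∨ H.arrow v u) ↔ (G0.arrow u v ∨ G0.arrow v u) := by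
    intro u v
    simpa only [MixedGraph.adj, hdag.1, hHdag.1, or_false] using hadj u v
  refine VP.markovEquiv_of_equ hHdag hdag ⟨hsk, ?_⟩
  intro u v w huw hn
  have hn' : ¬ H.adj u w := by simpa only [MixedGraph.adj, hHdag.1, or_false] using hn
  by_cases h1 : H.adj u v ∧ H.adj v w
  · rw [VP.collider_iff hHdag hHsk hvs hup' hdown' huw h1.1 h1.2 hn',
      VP.collider_iff hdag hGsk hvs hup hdown huw ((hadj _ _).1 h1.1) ((hadj _ _).1 h1.2)
        (fun h => hn' ((hadj _ _).2 h))]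
  · constructor
    · rintro ⟨a, b⟩
      exact (h1 ⟨Or.inl a, Or.inr (Or.inl b)⟩).elim
    · rintro ⟨a, b⟩
      exact (h1 ⟨(hadj _ _).2 (Or.inl a), (hadj _ _).2 (Or.inr (Or.inl b))⟩).elim
end

section
/- The joint distribution P of a structural causal model associated with a directed ancestral graph G_0 is Markovian to G_0: for all pairwise disjoint A,B,C⊆{1,…,N}, if A⊥B|C (m-separation) holds in G_0, then X_A is conditionally independent of X_B given X_C under P. -/
set_option linter.unusedSectionVars false
set_option linter.unusedVariables false

open MeasureTheory ProbabilityTheory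

/-! ## Structural causal models -/

section SCM

variable {V : Type} [DecidableEq V]

/-- Extend an assignment to the parents of `i` other than `p` by a value at `p`, giving an
assignment to all parents of `i`. -/
def combineAt (G : MixedGraph V) {𝓧 : V → Type} (i p : V)
    (x : ∀ k : {k : V // G.arrow k i ∧ k ≠ p}, 𝓧 k) (xp : 𝓧 p) :
    ∀ k : {k : V // G.arrow k i}, 𝓧 k :=
  fun k => if h : (k : V) = p then cast (congrArg 𝓧 h).symm xp
           else x ⟨k.1, ⟨k.2, h⟩⟩

/-- Restrict an assignment on `an(i,j)` to the parents of `i` other than `j` (which are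
contained in `an(i,j)` since the graph is ancestral and `j → i`). -/
def paProj (G : MixedGraph V) (i j : V) {𝓧 : V → Type}
    (hpa : ∀ k : V, G.arrow k i → k ≠ j → k ∈ G.anSet i j)
    (xA : ∀ a : G.anSet i j, 𝓧 a) :
    ∀ k : {k : V // G.arrow k i ∧ k ≠ j}, 𝓧 k :=
  fun k => xA ⟨k.1, hpa k.1 k.2.1 k.2.2⟩

variable {Ω : Type} [MeasurableSpace Ω]
  {𝓧 : V → Type} [∀ v, MeasurableSpace (𝓧 v)]
  {E : V → Type} [∀ v, MeasurableSpace (E v)]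

/-- `(X, ε, φ)` is a structural causal model associated with the graph `G` under `μ` :
all maps are measurable, `X_i = φ_i(X_{pa(i)}, ε_i)`, and for disjoint `A`, `B`, the noise
vectors `ε_A` and `ε_B` are independent iff there is no arc between `A` and `B`. -/
def IsSCM (G : MixedGraph V) (μ : MeasureTheory.Measure Ω)
    (X : ∀ v, Ω → 𝓧 v) (ε : ∀ v, Ω → E v)
    (φ : ∀ i, (∀ k : {k : V // G.arrow k i}, 𝓧 k) → E i → 𝓧 i) : Prop :=
  (∀ v, Measurable (X v)) ∧ (∀ v, Measurable (ε v)) ∧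
  (∀ i, Measurable fun q : (∀ k : {k : V // G.arrow k i}, 𝓧 k) × E i => φ i q.1 q.2) ∧
  (∀ i ω, X i ω = φ i (fun k => X k ω) (ε i ω)) ∧
  (∀ A B : Set V, Disjoint A B →
    (ProbabilityTheory.IndepFun (restrictVars ε A) (restrictVars ε B) μ ↔
      ¬ ∃ a ∈ A, ∃ b ∈ B, G.arc a b))

/-- Every function of the SCM is injective in its noise argument. -/
def NoiseInjective (G : MixedGraph V)
    (φ : ∀ i, (∀ k : {k : V // G.arrow k i}, 𝓧 k) → E i → 𝓧 i) : Prop :=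
  ∀ i x, Function.Injective (φ i x)

/-- Every function of the SCM is noise surjective. -/
def NoiseSurjective (G : MixedGraph V)
    (φ : ∀ i, (∀ k : {k : V // G.arrow k i}, 𝓧 k) → E i → 𝓧 i) : Prop :=
  ∀ i p : V, G.arrow p i →
    ∀ x : ∀ k : {k : V // G.arrow k i ∧ k ≠ p}, 𝓧 k,
      ∃ xs : 𝓧 i, ∀ e : E i, ∃ xp : 𝓧 p, φ i (combineAt G i p x xp) e = xs

variable [StandardBorelSpace Ω] [Nonempty Ω] [∀ v, StandardBorelSpace (𝓧 v)]
  [∀ v, Nonempty (𝓧 v)] [Countable V]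

/-- Positivity of the joint distribution : conditional probabilities of events of positive
probability are almost surely positive. -/
def Positivity (μ : MeasureTheory.Measure Ω) [MeasureTheory.IsFiniteMeasure μ]
    (X : ∀ v, Ω → 𝓧 v) (hX : ∀ v, Measurable (X v)) : Prop :=
  ∀ A B : Set V, Disjoint A B → ∀ S : Set (∀ b : B, 𝓧 b), MeasurableSet S →
    0 < μ.map (restrictVars X B) S →
    ∀ᵐ xA ∂(μ.map (restrictVars X A)),
      0 < ProbabilityTheory.condDistrib (restrictVars X B) (restrictVars X A) μ xA S

/-- The SCM has non-constant fibers. -/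
def NonConstantFibers (G : MixedGraph V) (μ : MeasureTheory.Measure Ω)
    (X : ∀ v, Ω → 𝓧 v) (ε : ∀ v, Ω → E v)
    (φ : ∀ i, (∀ k : {k : V // G.arrow k i}, 𝓧 k) → E i → 𝓧 i) : Prop :=
  ∀ i p : V, G.arrow p i →
    ∃ F : Set (∀ k : {k : V // G.arrow k i ∧ k ≠ p}, 𝓧 k),
      MeasurableSet F ∧
      0 < μ.map (fun ω (k : {k : V // G.arrow k i ∧ k ≠ p}) => X k ω) F ∧
      ∀ x ∈ F, ∃ S : Set (𝓧 i), MeasurableSet S ∧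
        ¬ ∃ c : ENNReal, ∀ᵐ xp ∂(μ.map (X p)),
          μ {ω | φ i (combineAt G i p x xp) (ε i ω) ∈ S} = c

end SCM

/-! ## Conditional independence of sigma-algebras -/

section SigmaAlg

variable {Ω : Type} {mΩ : MeasurableSpace Ω} [StandardBorelSpace Ω]
  {μ : Measure Ω} [IsProbabilityMeasure μ]

theorem aux_pullout {m' : MeasurableSpace Ω} (hm' : m' ≤ mΩ) {b t : Set Ω}
    (hb : MeasurableSet[mΩ] b) :
    μ[b.indicator (μ⟦t | m'⟧) | m'] =ᵐ[μ] (μ⟦b | m'⟧) * (μ⟦t | m'⟧) := by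
  have h1 : b.indicator (μ⟦t | m'⟧) = (b.indicator (fun _ => (1:ℝ))) * (μ⟦t | m'⟧) := by
    ext ω
    by_cases h : ω ∈ b <;> simp [h]
  rw [h1]
  apply condExp_mul_of_stronglyMeasurable_right
  · exact stronglyMeasurable_condExp
  · rw [← h1]
    exact integrable_condExp.indicator hb
  · exact (integrable_const _).indicator hb

theorem aux_condIndep_to {m' m₁ m₂ : MeasurableSpace Ω} (hm' : m' ≤ mΩ) (hm₁ : m₁ ≤ mΩ)
    (hm₂ : m₂ ≤ mΩ) (h : CondIndep m' m₁ m₂ hm' μ) (t : Set Ω) (ht : MeasurableSet[m₂] t) :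
    μ⟦t | m' ⊔ m₁⟧ =ᵐ[μ] μ⟦t | m'⟧ := by
  rw [condIndep_iff m' m₁ m₂ hm' hm₁ hm₂] at h
  have hsup : m' ⊔ m₁ ≤ mΩ := sup_le hm' hm₁
  have hti : Integrable (t.indicator (fun _ => (1:ℝ))) μ :=
    (integrable_const _).indicator (hm₂ _ ht)
  have hgi : Integrable (μ⟦t | m'⟧) μ := integrable_condExp
  have hgen : m' ⊔ m₁ = MeasurableSpace.generateFrom
      {u | ∃ a b, MeasurableSet[m'] a ∧ MeasurableSet[m₁] b ∧ u = a ∩ b} := by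
    apply le_antisymm
    · apply sup_le
      · intro a ha
        exact MeasurableSpace.measurableSet_generateFrom
          ⟨a, Set.univ, ha, @MeasurableSet.univ _ m₁, by simp⟩
      · intro b hb
        exact MeasurableSpace.measurableSet_generateFrom
          ⟨Set.univ, b, @MeasurableSet.univ _ m', hb, by simp⟩
    · apply MeasurableSpace.generateFrom_le
      rintro u ⟨a, b, ha, hb, rfl⟩
      exact @MeasurableSet.inter _ (m' ⊔ m₁) _ _ ((le_sup_left : m' ≤ m' ⊔ m₁) _ ha)
        ((le_sup_right : m₁ ≤ m' ⊔ m₁) _ hb)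
  have hpi : IsPiSystem
      {u : Set Ω | ∃ a b, MeasurableSet[m'] a ∧ MeasurableSet[m₁] b ∧ u = a ∩ b} := by
    rintro _ ⟨a, b, ha, hb, rfl⟩ _ ⟨a', b', ha', hb', rfl⟩ _
    exact ⟨a ∩ a', b ∩ b', @MeasurableSet.inter _ m' _ _ ha ha',
      @MeasurableSet.inter _ m₁ _ _ hb hb', Set.inter_inter_inter_comm _ _ _ _⟩
  symm
  refine ae_eq_condExp_of_forall_setIntegral_eq hsup hti (fun s _ _ => hgi.integrableOn)
    ?_ ?_
  · suffices H : ∀ s : Set Ω, MeasurableSet[m' ⊔ m₁] s →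
        ∫ x in s, (μ⟦t | m'⟧) x ∂μ = ∫ x in s, t.indicator (fun _ => (1:ℝ)) x ∂μ from
      fun s hs _ => H s hs
    intro s hs
    induction s, hs using MeasurableSpace.induction_on_inter hgen hpi with
    | empty => simp
    | basic u hu =>
      obtain ⟨a, b, ha, hb, rfl⟩ := hu
      have hb' := hm₁ _ hb
      have ha' := hm' _ ha
      calc ∫ x in a ∩ b, (μ⟦t | m'⟧) x ∂μ
          = ∫ x in a, b.indicator (μ⟦t | m'⟧) x ∂μ := by
            rw [setIntegral_indicator hb']
        _ = ∫ x in a, (μ[b.indicator (μ⟦t | m'⟧) | m']) x ∂μ := by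
            rw [setIntegral_condExp hm' (hgi.indicator hb') ha]
        _ = ∫ x in a, (μ⟦b ∩ t | m'⟧) x ∂μ := by
            apply setIntegral_congr_ae ha'
            filter_upwards [(aux_pullout (μ := μ) (t := t) hm' hb').trans (h b t hb ht).symm]
              with x hx _ using hx
        _ = ∫ x in a, (b ∩ t).indicator (fun _ => (1:ℝ)) x ∂μ := by
            rw [setIntegral_condExp hm' _ ha]
            exact (integrable_const _).indicator (hb'.inter (hm₂ _ ht))
        _ = ∫ x in a ∩ b, t.indicator (fun _ => (1:ℝ)) x ∂μ := by
            rw [← Set.indicator_indicator, setIntegral_indicator hb']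
    | compl u hu ih =>
      have e1 := integral_add_compl (hsup _ hu) hgi
      have e2 := integral_add_compl (hsup _ hu) hti
      have e3 : ∫ x, (μ⟦t | m'⟧) x ∂μ = ∫ x, t.indicator (fun _ => (1:ℝ)) x ∂μ :=
        integral_condExp hm'
      linarith
    | iUnion f hd hf ih =>
      rw [integral_iUnion (fun i => hsup _ (hf i)) hd hgi.integrableOn,
        integral_iUnion (fun i => hsup _ (hf i)) hd hti.integrableOn]
      exact tsum_congr ih
  · have hs : StronglyMeasurable[m' ⊔ m₁] (μ⟦t | m'⟧) :=
      (stronglyMeasurable_condExp (m := m')).mono le_sup_left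
    exact hs.aestronglyMeasurable

theorem aux_condIndep_of {m' m₁ m₂ : MeasurableSpace Ω} (hm' : m' ≤ mΩ) (hm₁ : m₁ ≤ mΩ)
    (hm₂ : m₂ ≤ mΩ)
    (h : ∀ t : Set Ω, MeasurableSet[m₂] t → μ⟦t | m' ⊔ m₁⟧ =ᵐ[μ] μ⟦t | m'⟧) :
    CondIndep m' m₁ m₂ hm' μ := by
  rw [condIndep_iff m' m₁ m₂ hm' hm₁ hm₂]
  intro b t hb ht
  have hsup : m' ⊔ m₁ ≤ mΩ := sup_le hm' hm₁
  have hti : Integrable (t.indicator (fun _ => (1:ℝ))) μ :=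
    (integrable_const _).indicator (hm₂ _ ht)
  have hb2 : MeasurableSet[m' ⊔ m₁] b := (le_sup_right : m₁ ≤ m' ⊔ m₁) _ hb
  calc μ⟦b ∩ t | m'⟧ =ᵐ[μ] μ[μ⟦b ∩ t | m' ⊔ m₁⟧ | m'] :=
        (condExp_condExp_of_le le_sup_left hsup).symm
    _ =ᵐ[μ] μ[b.indicator (μ⟦t | m'⟧) | m'] := by
        apply condExp_congr_ae
        rw [← Set.indicator_indicator]
        refine (condExp_indicator hti hb2).trans ?_
        filter_upwards [h t ht] with x hx
        by_cases hxb : x ∈ b <;> simp [hxb, hx]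
    _ =ᵐ[μ] _ := aux_pullout hm' (hm₁ _ hb)

theorem aux_between {m' m₁ n : MeasurableSpace Ω} (hsup : m' ⊔ m₁ ≤ mΩ)
    (h1 : m' ≤ n) (h2 : n ≤ m' ⊔ m₁) {t : Set Ω}
    (h : μ⟦t | m' ⊔ m₁⟧ =ᵐ[μ] μ⟦t | m'⟧) : μ⟦t | n⟧ =ᵐ[μ] μ⟦t | m'⟧ := by
  have hn : n ≤ mΩ := h2.trans hsup
  calc μ⟦t | n⟧ =ᵐ[μ] μ[μ⟦t | m' ⊔ m₁⟧ | n] := (condExp_condExp_of_le h2 hsup).symm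
    _ =ᵐ[μ] μ[μ⟦t | m'⟧ | n] := condExp_congr_ae h
    _ =ᵐ[μ] μ⟦t | m'⟧ := by
      rw [condExp_of_stronglyMeasurable hn (stronglyMeasurable_condExp.mono h1)
        integrable_condExp]

theorem aux_weakUnion {m' m₁ m₂ m₃ : MeasurableSpace Ω} (hm' : m' ≤ mΩ) (hm₁ : m₁ ≤ mΩ)
    (hm₂ : m₂ ≤ mΩ) (h : CondIndep m' m₁ m₂ hm' μ) (h3 : m₃ ≤ m' ⊔ m₁)
    (hm3 : m' ⊔ m₃ ≤ mΩ) :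
    CondIndep (m' ⊔ m₃) m₁ m₂ hm3 μ := by
  apply aux_condIndep_of _ hm₁ hm₂
  intro t ht
  have hsup : m' ⊔ m₁ ≤ mΩ := sup_le hm' hm₁
  have h0 := aux_condIndep_to hm' hm₁ hm₂ h t ht
  have e1 := aux_between (n := m' ⊔ m₃) hsup le_sup_left (sup_le le_sup_left h3) h0
  have e2 := aux_between (n := m' ⊔ m₃ ⊔ m₁) hsup (le_sup_left.trans le_sup_left)
    (sup_le (sup_le le_sup_left h3) le_sup_right) h0
  exact e2.trans e1.symm

theorem aux_mono_left {m' m₁ m₂ m₃ : MeasurableSpace Ω} (hm' : m' ≤ mΩ) (hm₁ : m₁ ≤ mΩ)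
    (hm₂ : m₂ ≤ mΩ) (h : CondIndep m' m₁ m₂ hm' μ) (h3 : m₃ ≤ m' ⊔ m₁) :
    CondIndep m' m₃ m₂ hm' μ := by
  have hsup : m' ⊔ m₁ ≤ mΩ := sup_le hm' hm₁
  apply aux_condIndep_of _ (h3.trans hsup) hm₂
  intro t ht
  exact aux_between hsup le_sup_left (sup_le le_sup_left h3)
    (aux_condIndep_to hm' hm₁ hm₂ h t ht)

theorem aux_indep {m₁ m₂ : MeasurableSpace Ω} (hm₁ : m₁ ≤ mΩ) (hm₂ : m₂ ≤ mΩ)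
    (h : Indep m₁ m₂ μ) : CondIndep ⊥ m₁ m₂ bot_le μ := by
  apply aux_condIndep_of _ hm₁ hm₂
  intro t ht
  rw [bot_sup_eq, condExp_bot]
  refine condExp_indep_eq hm₂ hm₁ ?_ h.symm
  exact stronglyMeasurable_const.indicator ht

end SigmaAlg

/-! ## Walks and paths -/

namespace MixedGraph

variable {V : Type} (G : MixedGraph V)

/-- `v` is in `C` or an ancestor of a node in `C`. -/
def AnC (C : Set V) (v : V) : Prop := v ∈ C ∨ ∃ c ∈ C, G.anc v c

/-- The inner node `b` of the tripath is open given `C`. -/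
def Trip (C : Set V) (a b c : V) : Prop :=
  (G.collider a b c → G.AnC C b) ∧ (¬ G.collider a b c → b ∉ C)

/-- All inner nodes are open and consecutive nodes are adjacent. -/
def Walk (C : Set V) : List V → Prop
  | [] => True
  | [_] => True
  | [a, b] => G.adj a b
  | a :: b :: c :: l => G.adj a b ∧ G.Trip C a b c ∧ Walk C (b :: c :: l)

variable {G} {C : Set V}

theorem Walk.tail {a : V} {l : List V} (h : G.Walk C (a :: l)) : G.Walk C l := by
  match l, h with
  | [], _ => trivial
  | [b], _ => trivial
  | b :: c :: l, h => exact h.2.2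

theorem Walk.adj {a b : V} {l : List V} (h : G.Walk C (a :: b :: l)) : G.adj a b := by
  match l, h with
  | [], h => exact h
  | c :: l, h => exact h.1

theorem Walk.right {l₁ l₂ : List V} (h : G.Walk C (l₁ ++ l₂)) : G.Walk C l₂ := by
  induction l₁ with
  | nil => exact h
  | cons a l ih => exact ih (Walk.tail h)

theorem Walk.left {l₁ l₂ : List V} (h : G.Walk C (l₁ ++ l₂)) : G.Walk C l₁ := by
  induction l₁ with
  | nil => trivial
  | cons a l ih =>
    match l, ih, h with
    | [], _, _ => trivial
    | [b], _, h => exact Walk.adj h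
    | b :: c :: l, ih, h => exact ⟨h.1, h.2.1, ih h.2.2⟩

theorem Walk.glue {l₁ l₂ : List V} {a v c : V} (h1 : G.Walk C (l₁ ++ [a, v]))
    (h2 : G.Walk C (v :: c :: l₂)) (ht : G.Trip C a v c) :
    G.Walk C (l₁ ++ a :: v :: c :: l₂) := by
  induction l₁ with
  | nil => exact ⟨h1, ht, h2⟩
  | cons b l ih =>
    match l, ih, h1 with
    | [], ih, h1 => exact ⟨h1.1, h1.2.1, ih h1.2.2⟩
    | [d], ih, h1 => exact ⟨h1.1, h1.2.1, ih h1.2.2⟩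
    | d :: e :: l, ih, h1 => exact ⟨h1.1, h1.2.1, ih h1.2.2⟩

theorem Walk.trip {l₁ l₂ : List V} {a v c : V} (h : G.Walk C (l₁ ++ a :: v :: c :: l₂)) :
    G.Trip C a v c := (Walk.right h).2.1

theorem AnC.of_arrow {a b : V} (h : G.arrow a b) (hb : G.AnC C b) : G.AnC C a := by
  right
  rcases hb with hb | ⟨c, hc, hbc⟩
  · exact ⟨b, hb, Relation.TransGen.single h⟩
  · exact ⟨c, hc, Relation.TransGen.head h hbc⟩

theorem Walk.directed (hG : G.IsDirectedAncestral) {l : List V} {a b z : V}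
    (h : G.Walk C (a :: b :: (l ++ [z]))) (hab : G.arrow a b) :
    G.AnC C a ∨ G.anc a z := by
  induction l generalizing a b with
  | nil =>
    obtain ⟨_, ht, hadj⟩ := h
    by_cases hb : G.arrow b z
    · exact Or.inr ((Relation.TransGen.single hab).tail hb)
    · left
      have hz : G.headInto z b := by
        rcases hadj with h | h | h
        · exact absurd h hb
        · exact Or.inl h
        · exact Or.inr ((hG.1 _ _).1 h)
      exact AnC.of_arrow hab (ht.1 ⟨Or.inl hab, hz⟩)
  | cons c l ih =>
    obtain ⟨_, ht, hw⟩ := h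
    by_cases hb : G.arrow b c
    · rcases ih hw hb with h | h
      · exact Or.inl (AnC.of_arrow hab h)
      · exact Or.inr (Relation.TransGen.head hab h)
    · left
      have hz : G.headInto c b := by
        rcases hw.adj with h | h | h
        · exact absurd h hb
        · exact Or.inl h
        · exact Or.inr ((hG.1 _ _).1 h)
      exact AnC.of_arrow hab (ht.1 ⟨Or.inl hab, hz⟩)

theorem not_adj_self (hG : G.IsDirectedAncestral) (v : V) : ¬ G.adj v v := by
  rintro (h | h | h)
  · exact hG.2.2.1 _ _ ⟨h, h⟩
  · exact hG.2.2.1 _ _ ⟨h, h⟩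
  · exact hG.2.1 _ h

theorem Walk.cut (hG : G.IsDirectedAncestral) {l₁ l₂ l₃ : List V} {v : V}
    (h : G.Walk C (l₁ ++ v :: (l₂ ++ v :: l₃))) : G.Walk C (l₁ ++ v :: l₃) := by
  have hr : G.Walk C (v :: l₃) := by
    have := Walk.right h
    rw [← List.cons_append] at this
    exact Walk.right this
  have hl : G.Walk C (l₁ ++ [v]) := by
    apply Walk.left (l₂ := l₂ ++ v :: l₃)
    simpa using h
  rcases List.eq_nil_or_concat l₁ with rfl | ⟨l₁, a, rfl⟩
  · exact hr
  rcases l₃ with _ | ⟨c, l₃⟩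
  · exact hl
  simp only [List.concat_eq_append, List.append_assoc, List.cons_append, List.nil_append]
    at h hl hr ⊢
  refine Walk.glue hl hr ?_
  rcases l₂ with _ | ⟨x, l₂⟩
  · exact absurd (Walk.right h).tail.adj (not_adj_self hG v)
  have t1 : G.Trip C a v x := Walk.trip h
  have hs : G.Walk C (v :: x :: (l₂ ++ [v])) := by
    have := (Walk.right h).tail
    apply Walk.left (l₂ := c :: l₃)
    simpa using this
  have t2 : ∃ y, G.Trip C y v c := by
    have h' := (Walk.right h).tail.tail
    rcases List.eq_nil_or_concat (x :: l₂) with h0 | ⟨l, y, h0⟩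
    · simp at h0
    · rw [h0] at h'
      simp only [List.concat_eq_append, List.append_assoc, List.cons_append, List.nil_append] at h'
      exact ⟨y, Walk.trip h'⟩
  obtain ⟨y, t2⟩ := t2
  constructor
  · intro hc
    by_cases hx : G.collider a v x
    · exact t1.1 hx
    · have hvx : G.arrow v x := by
        rcases hs.adj with h | h | h
        · exact h
        · exact absurd ⟨hc.1, Or.inl h⟩ hx
        · exact absurd ⟨hc.1, Or.inr ((hG.1 _ _).1 h)⟩ hx
      rcases Walk.directed hG hs hvx with h | h
      · exact h
      · exact absurd h (hG.2.2.2.2.1 v)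
  · intro hc
    by_cases ha : G.headInto a v
    · exact t2.2 fun h => hc ⟨ha, h.2⟩
    · exact t1.2 fun h => ha h.1

theorem Walk.connecting {p : List V} (h : G.Walk C p) (hn : p.Nodup) : G.Connecting C p := by
  refine ⟨hn, ?_, ?_⟩
  · clear hn
    show List.IsChain G.adj p
    induction p with
    | nil => exact List.IsChain.nil
    | cons a l ih =>
      rcases l with _ | ⟨b, l⟩
      · exact List.IsChain.singleton a
      · exact List.IsChain.cons_cons h.adj (ih h.tail)
  · clear hn
    intro t ht h1 h2 h3
    obtain ⟨t, rfl⟩ : ∃ s, t = s + 1 := ⟨t - 1, by omega⟩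
    have h4 : t < p.length := by omega
    have : G.Trip C (p.get ⟨t, h4⟩) (p.get ⟨t+1, h2⟩) (p.get ⟨t+1+1, h3⟩) := by
      clear h1
      have e : p = p.take t ++ p.get ⟨t, h4⟩ :: p.get ⟨t+1, h2⟩ :: p.get ⟨t+1+1, h3⟩ ::
          p.drop (t+1+1+1) := by
        simp
      rw [e] at h
      exact Walk.trip h
    exact this

theorem Walk.exists_path (hG : G.IsDirectedAncestral) (n : ℕ) : ∀ p : List V, p.length ≤ n →
    G.Walk C p → ∃ q, G.Connecting C q ∧ q.head? = p.head? ∧ q.getLast? = p.getLast? := by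
  induction n with
  | zero =>
    intro p hp h
    obtain rfl : p = [] := by simpa using hp
    exact ⟨[], h.connecting List.nodup_nil, rfl, rfl⟩
  | succ n ih =>
    intro p hp h
    by_cases hn : p.Nodup
    · exact ⟨p, h.connecting hn, rfl, rfl⟩
    · have : ∃ l₁ v l₂ l₃, p = l₁ ++ v :: (l₂ ++ v :: l₃) := by
        clear ih hp h
        induction p with
        | nil => simp at hn
        | cons a l ih =>
          by_cases ha : a ∈ l
          · obtain ⟨s, t, rfl⟩ := List.append_of_mem ha
            exact ⟨[], a, s, t, rfl⟩
          · have : ¬ l.Nodup := fun h => hn (List.nodup_cons.2 ⟨ha, h⟩)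
            obtain ⟨l₁, v, l₂, l₃, rfl⟩ := ih this
            exact ⟨a :: l₁, v, l₂, l₃, rfl⟩
      obtain ⟨l₁, v, l₂, l₃, rfl⟩ := this
      obtain ⟨q, hq, e1, e2⟩ := ih (l₁ ++ v :: l₃) (by simp at hp ⊢; omega) (h.cut hG)
      refine ⟨q, hq, ?_, ?_⟩
      · rw [e1]; cases l₁ <;> simp
      · rw [e2]
        simp [List.getLast?_append, List.getLast?_cons]

/-- `Rch G C B v h` : `v` is reachable from `B` by an open walk; `h` tells whether
the last edge has an arrowhead at `v`. -/
inductive Rch (G : MixedGraph V) (C B : Set V) : V → Prop → Prop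
  | init {b : V} (hb : b ∈ B) : Rch G C B b False
  | step {v u : V} {h : Prop} (hv : Rch G C B v h) (hadj : G.adj u v)
      (h1 : h ∧ G.headInto u v → G.AnC C v) (h2 : ¬ (h ∧ G.headInto u v) → v ∉ C) :
      Rch G C B u (G.headInto v u)

theorem Rch.walk {B : Set V} {v : V} {h : Prop} (hr : Rch G C B v h) :
    (∃ b ∈ B, ∃ l, G.Walk C (v :: l) ∧ (v :: l).getLast? = some b ∧
      (∀ u l', l = u :: l' → (h ↔ G.headInto u v))) := by
  induction hr with
  | init hb => exact ⟨_, hb, [], trivial, rfl, by simp⟩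
  | @step v u h hv hadj h1 h2 ih =>
    obtain ⟨b, hb, l, hw, hl, hh⟩ := ih
    refine ⟨b, hb, v :: l, ?_, ?_, ?_⟩
    · rcases l with _ | ⟨c, l⟩
      · exact hadj
      · refine ⟨hadj, ⟨fun hc => h1 ⟨(hh c l rfl).2 hc.2, hc.1⟩,
          fun hc => h2 fun hc' => hc ⟨hc'.2, (hh c l rfl).1 hc'.1⟩⟩, hw⟩
    · rw [List.getLast?_cons_cons]; exact hl
    · rintro _ _ e
      cases e
      rfl

theorem Rch.not_mem (hG : G.IsDirectedAncestral) {A B : Set V} (hsep : G.mSep A B C)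
    {v : V} {h : Prop} (hr : Rch G C B v h) : v ∉ A := by
  intro hv
  obtain ⟨b, hb, l, hw, hl, -⟩ := hr.walk
  obtain ⟨q, hq, e1, e2⟩ := Walk.exists_path hG _ _ le_rfl hw
  exact hsep ⟨q, hq, ⟨v, hv, by rw [e1]; rfl⟩, ⟨b, hb, by rw [e2, hl]⟩⟩

end MixedGraph

namespace MixedGraph

variable {V : Type} {G : MixedGraph V} {C : Set V}

theorem not_headInto_of_arrow (hG : G.IsDirectedAncestral) {u v : V} (h : G.arrow u v) :
    ¬ G.headInto v u := by
  rintro (h' | h')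
  · exact hG.2.2.1 _ _ ⟨h, h'⟩
  · exact hG.2.2.2.1 _ _ ⟨h, (hG.1 _ _).1 h'⟩

theorem Rch.down (hG : G.IsDirectedAncestral) {B : Set V} {v w : V} (hvw : G.anc v w) :
    ∀ {h : Prop}, Rch G C B v h → ¬ G.AnC C v → ∃ h', Rch G C B w h' := by
  induction hvw using Relation.TransGen.head_induction_on with
  | single hab =>
    intro h hr hn
    exact ⟨_, Rch.step hr (Or.inr (Or.inl hab))
      (fun hc => absurd hc.2 (not_headInto_of_arrow hG hab)) (fun _ hc => hn (Or.inl hc))⟩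
  | head hab _ ih =>
    intro h hr hn
    exact ih (Rch.step hr (Or.inr (Or.inl hab))
      (fun hc => absurd hc.2 (not_headInto_of_arrow hG hab)) (fun _ hc => hn (Or.inl hc)))
      (fun hc => hn (AnC.of_arrow hab hc))

theorem Rch.up_step (hG : G.IsDirectedAncestral) {B : Set V} {v w : V} (hvw : G.arrow v w)
    (hr : Rch G C B w False) (hw : w ∉ C) : Rch G C B v False := by
  have := Rch.step (u := v) hr (Or.inl hvw) (fun hc => hc.1.elim) (fun _ => hw)
  rwa [eq_false (not_headInto_of_arrow hG hvw)] at this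

theorem Rch.up (hG : G.IsDirectedAncestral) {B : Set V} {v w : V} (hw : w ∈ B)
    (hvw : G.anc v w) : ¬ G.AnC C v → Rch G C B v False := by
  induction hvw using Relation.TransGen.head_induction_on with
  | single hab =>
    intro hn
    exact Rch.up_step hG hab (Rch.init hw) (fun hc => hn (AnC.of_arrow hab (Or.inl hc)))
  | head hab _ ih =>
    intro hn
    exact Rch.up_step hG hab (ih (fun hc => hn (AnC.of_arrow hab hc)))
      (fun hc => hn (AnC.of_arrow hab (Or.inl hc)))

theorem decomp (hG : G.IsDirectedAncestral) {A B C : Set V}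
    (hBC : Disjoint B C) (hsep : G.mSep A B C) :
    ∃ W S : Set V, (∀ u v, v ∈ W → G.arrow u v → u ∈ W) ∧ A ⊆ W ∧ B ⊆ W ∧ C ⊆ W ∧ S ⊆ W ∧
      B ⊆ S ∧ Disjoint A S ∧ (∀ u v, v ∈ S → u ∈ W → G.arc u v → u ∈ S) ∧
      (∀ u v, v ∈ S → G.arrow u v → u ∈ S ∪ C) ∧
      (∀ u v, v ∈ W \ S → G.arrow u v → u ∈ (W \ S) ∪ C) := by
  set W : Set V := {v | G.AnC (A ∪ B ∪ C) v} with hW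
  set S : Set V := {v | v ∈ W ∧ ∃ h, Rch G C B v h ∧ (h ∨ v ∉ C)} with hS
  have hWanc : ∀ u v, v ∈ W → G.arrow u v → u ∈ W := fun u v hv h => AnC.of_arrow h hv
  have pass : ∀ u v h, v ∈ W → v ∉ C → Rch G C B v h → G.adj u v →
      Rch G C B u (G.headInto v u) := by
    intro u v h hv hC hr hadj
    by_cases han : G.AnC C v
    · exact Rch.step hr hadj (fun _ => han) (fun _ => hC)
    · have key : Rch G C B v False := by
        rcases hv with ((hv | hv) | hv) | ⟨w, (hw | hw) | hw, hvw⟩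
        · exact absurd hv (hr.not_mem hG hsep)
        · exact Rch.init hv
        · exact absurd hv hC
        · obtain ⟨h', hr'⟩ := Rch.down hG hvw hr han
          exact absurd hw (hr'.not_mem hG hsep)
        · exact Rch.up hG hw hvw han
        · exact absurd (Or.inr ⟨w, hw, hvw⟩) han
      exact Rch.step key hadj (fun hc => hc.1.elim) (fun _ => hC)
  have passS : ∀ u v, v ∈ S → G.headInto u v → Rch G C B u (G.headInto v u) := by
    rintro u v ⟨hvW, h, hr, hh⟩ huv
    have hadj : G.adj u v := by
      rcases huv with h | h
      · exact Or.inl h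
      · exact Or.inr (Or.inr h)
    by_cases hC : v ∈ C
    · have hh' : h := hh.resolve_right (fun h => h hC)
      exact Rch.step hr hadj (fun _ => Or.inl hC) (fun hc => absurd ⟨hh', huv⟩ hc)
    · exact pass u v h hvW hC hr hadj
  refine ⟨W, S, hWanc, fun a ha => Or.inl (Or.inl (Or.inl ha)),
    fun a ha => Or.inl (Or.inl (Or.inr ha)), fun a ha => Or.inl (Or.inr ha), fun a ha => ha.1,
    ?_, ?_, ?_, ?_, ?_⟩
  · intro b hb
    exact ⟨Or.inl (Or.inl (Or.inr hb)), False, Rch.init hb,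
      Or.inr (Set.disjoint_left.1 hBC hb)⟩
  · rw [Set.disjoint_left]
    rintro a ha ⟨_, h, hr, _⟩
    exact hr.not_mem hG hsep ha
  · intro u v hv hu huv
    exact ⟨hu, _, passS u v hv (Or.inr huv), Or.inl (Or.inr ((hG.1 _ _).1 huv))⟩
  · intro u v hv huv
    by_cases hC : u ∈ C
    · exact Or.inr hC
    · exact Or.inl ⟨hWanc u v hv.1 huv, _, passS u v hv (Or.inl huv), Or.inr hC⟩
  · intro u v hv huv
    by_cases hC : u ∈ C
    · exact Or.inr hC
    · refine Or.inl ⟨hWanc u v hv.1 huv, ?_⟩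
      rintro ⟨huW, h, hr, _⟩
      exact hv.2 ⟨hv.1, _, pass v u h huW hC hr (Or.inr (Or.inl huv)), Or.inl (Or.inl huv)⟩

end MixedGraph

/-! ## Sigma-algebras generated by subfamilies -/

section Generated

variable {V : Type} {Ω : Type} {mΩ : MeasurableSpace Ω} {𝓧 : V → Type}
  [∀ v, MeasurableSpace (𝓧 v)]

/-- The sigma-algebra generated by the variables in `S`. -/
def mm (X : ∀ v, Ω → 𝓧 v) (S : Set V) : MeasurableSpace Ω :=
  ⨆ v ∈ S, MeasurableSpace.comap (X v) inferInstance

theorem mm_eq (X : ∀ v, Ω → 𝓧 v) (S : Set V) :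
    MeasurableSpace.comap (restrictVars X S) MeasurableSpace.pi = mm X S := by
  rw [mm, iSup_subtype', MeasurableSpace.pi, MeasurableSpace.comap_iSup]
  simp only [MeasurableSpace.comap_comp]
  rfl

theorem mm_mono (X : ∀ v, Ω → 𝓧 v) {S T : Set V} (h : S ⊆ T) : mm X S ≤ mm X T :=
  biSup_mono h

theorem mm_empty (X : ∀ v, Ω → 𝓧 v) : mm X ∅ = ⊥ := by simp [mm]

theorem mm_single (X : ∀ v, Ω → 𝓧 v) {S : Set V} {v : V} (h : v ∈ S) :
    MeasurableSpace.comap (X v) inferInstance ≤ mm X S :=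
  le_biSup (fun v => MeasurableSpace.comap (X v) inferInstance) h

theorem mm_insert (X : ∀ v, Ω → 𝓧 v) (v : V) (S : Set V) :
    mm X (insert v S) = mm X S ⊔ MeasurableSpace.comap (X v) inferInstance := by
  rw [mm, iSup_insert, sup_comm]; rfl

theorem mm_le {X : ∀ v, Ω → 𝓧 v} (hX : ∀ v, Measurable (X v)) (S : Set V) : mm X S ≤ mΩ :=
  iSup₂_le fun v _ => (hX v).comap_le

theorem mm_union_le (X : ∀ v, Ω → 𝓧 v) (S T : Set V) : mm X (S ∪ T) ≤ mm X S ⊔ mm X T := by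
  refine iSup₂_le fun v hv => ?_
  rcases hv with hv | hv
  · exact (mm_single X hv).trans le_sup_left
  · exact (mm_single X hv).trans le_sup_right

variable {E : V → Type} [∀ v, MeasurableSpace (E v)]

theorem mm_phi {G : MixedGraph V} (X : ∀ v, Ω → 𝓧 v) (ε : ∀ v, Ω → E v)
    (φ : ∀ i, (∀ k : {k : V // G.arrow k i}, 𝓧 k) → E i → 𝓧 i)
    (hφ : ∀ i, Measurable fun q : (∀ k : {k : V // G.arrow k i}, 𝓧 k) × E i => φ i q.1 q.2)
    (hXφ : ∀ i ω, X i ω = φ i (fun k => X k ω) (ε i ω)) (v : V) :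
    MeasurableSpace.comap (X v) inferInstance ≤
      mm X {u | G.arrow u v} ⊔ MeasurableSpace.comap (ε v) inferInstance := by
  have e : X v = (fun q : (∀ k : {k : V // G.arrow k v}, 𝓧 k) × E v => φ v q.1 q.2) ∘
      (fun ω => ((fun k : {k : V // G.arrow k v} => X k ω), ε v ω)) := by
    ext ω; exact hXφ v ω
  rw [e, ← MeasurableSpace.comap_comp]
  refine (MeasurableSpace.comap_mono (hφ v).comap_le).trans ?_
  rw [← measurable_iff_comap_le]
  refine Measurable.prodMk ?_ ?_
  · rw [@measurable_pi_iff]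
    intro k
    rw [measurable_iff_comap_le]
    exact (mm_single X (S := {u | G.arrow u v}) (v := (k : V)) k.2).trans le_sup_left
  · rw [measurable_iff_comap_le]
    exact le_sup_right

variable [StandardBorelSpace Ω] {μ : Measure Ω} [IsProbabilityMeasure μ]

/-- The invariant. -/
def KP (μ : Measure Ω) [IsProbabilityMeasure μ] (X : ∀ v, Ω → 𝓧 v) (hX : ∀ v, Measurable (X v))
    (ε : ∀ v, Ω → E v) (C S T U : Set V) : Prop :=
  CondIndep (mm X (C ∩ U)) (mm ε S) (mm ε T) (mm_le hX _) μ ∧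
  mm X (S ∩ U) ≤ mm X (C ∩ U) ⊔ mm ε S ∧
  mm X (T ∩ U) ≤ mm X (C ∩ U) ⊔ mm ε T

theorem KP.symm {X : ∀ v, Ω → 𝓧 v} {hX : ∀ v, Measurable (X v)}
    {ε : ∀ v, Ω → E v} {C S T U : Set V} (h : KP μ X hX ε C S T U) : KP μ X hX ε C T S U :=
  ⟨h.1.symm, h.2.2, h.2.1⟩

theorem KP.step {G : MixedGraph V} {X : ∀ v, Ω → 𝓧 v} {hX : ∀ v, Measurable (X v)}
    {ε : ∀ v, Ω → E v} (hε : ∀ v, Measurable (ε v))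
    (φ : ∀ i, (∀ k : {k : V // G.arrow k i}, 𝓧 k) → E i → 𝓧 i)
    (hφ : ∀ i, Measurable fun q : (∀ k : {k : V // G.arrow k i}, 𝓧 k) × E i => φ i q.1 q.2)
    (hXφ : ∀ i ω, X i ω = φ i (fun k => X k ω) (ε i ω))
    {C S T U : Set V} (h : KP μ X hX ε C S T U) (hST : Disjoint S T) {v : V} (hv : v ∈ S)
    (hpaU : ∀ u, G.arrow u v → u ∈ U) (hpa : ∀ u, G.arrow u v → u ∈ S ∪ C) :
    KP μ X hX ε C S T (insert v U) := by
  obtain ⟨h1, h2, h3⟩ := h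
  have hvT : v ∉ T := Set.disjoint_left.1 hST hv
  have hXv : MeasurableSpace.comap (X v) inferInstance ≤ mm X (C ∩ U) ⊔ mm ε S := by
    refine (mm_phi X ε φ hφ hXφ v).trans (sup_le ?_ ((mm_single ε hv).trans le_sup_right))
    have hsub : {u | G.arrow u v} ⊆ (S ∩ U) ∪ (C ∩ U) := by
      intro u hu
      rcases hpa u hu with h | h
      · exact Or.inl ⟨h, hpaU u hu⟩
      · exact Or.inr ⟨h, hpaU u hu⟩
    exact (mm_mono X hsub).trans ((mm_union_le X _ _).trans (sup_le h2 le_sup_left))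
  have hmono : mm X (C ∩ U) ≤ mm X (C ∩ insert v U) :=
    mm_mono X (Set.inter_subset_inter_right _ (Set.subset_insert _ _))
  refine ⟨?_, ?_, ?_⟩
  · by_cases hC : v ∈ C
    · have e : mm X (C ∩ insert v U) =
          mm X (C ∩ U) ⊔ MeasurableSpace.comap (X v) inferInstance := by
        rw [Set.inter_insert_of_mem hC, mm_insert]
      simp only [e]
      exact aux_weakUnion (mm_le hX _) (mm_le hε _) (mm_le hε _) h1 hXv _
    · simp only [Set.inter_insert_of_notMem hC]
      exact h1
  · rw [Set.inter_insert_of_mem hv, mm_insert]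
    exact (sup_le h2 hXv).trans (sup_le_sup_right hmono _)
  · rw [Set.inter_insert_of_notMem hvT]
    exact h3.trans (sup_le_sup_right hmono _)

theorem KP.all [Finite V] {G : MixedGraph V} (hG : G.IsDirectedAncestral)
    {X : ∀ v, Ω → 𝓧 v} {hX : ∀ v, Measurable (X v)}
    {ε : ∀ v, Ω → E v} (hε : ∀ v, Measurable (ε v))
    (φ : ∀ i, (∀ k : {k : V // G.arrow k i}, 𝓧 k) → E i → 𝓧 i)
    (hφ : ∀ i, Measurable fun q : (∀ k : {k : V // G.arrow k i}, 𝓧 k) × E i => φ i q.1 q.2)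
    (hXφ : ∀ i ω, X i ω = φ i (fun k => X k ω) (ε i ω))
    {C S T : Set V} (hST : Disjoint S T)
    (hind : Indep (mm ε S) (mm ε T) μ)
    (hS : ∀ u v, v ∈ S → G.arrow u v → u ∈ S ∪ C)
    (hT : ∀ u v, v ∈ T → G.arrow u v → u ∈ T ∪ C) (n : ℕ) :
    ∀ U : Set V, U.ncard = n → U ⊆ S ∪ T → (∀ u v, v ∈ U → G.arrow u v → u ∈ U) →
      KP μ X hX ε C S T U := by
  induction n with
  | zero =>
    intro U hU _ _
    obtain rfl : U = ∅ := (Set.ncard_eq_zero (Set.toFinite U)).1 hU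
    refine ⟨?_, ?_, ?_⟩
    · simp only [Set.inter_empty, mm_empty]
      exact aux_indep (mm_le hε _) (mm_le hε _) hind
    · simp [mm_empty]
    · simp [mm_empty]
  | succ n ih =>
    intro U hU hUW hanc
    have hne : U.Nonempty := (Set.ncard_pos (Set.toFinite U)).1 (by omega)
    haveI : IsTrans V (fun a b => G.anc b a) := ⟨fun a b c h1 h2 => Relation.TransGen.trans h2 h1⟩
    haveI : Std.Irrefl (fun a b => G.anc b a) := ⟨fun a => hG.2.2.2.2.1 a⟩
    obtain ⟨v, hv, hmin⟩ :=
      (Finite.wellFounded_of_trans_of_irrefl (fun a b => G.anc b a)).has_min U hne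
    have hmin' : ∀ w ∈ U, ¬ G.arrow v w := fun w hw h =>
      hmin w hw (Relation.TransGen.single h)
    have hK := ih (U \ {v}) (by
        have := Set.ncard_diff_singleton_add_one hv (Set.toFinite U)
        omega) (Set.diff_subset.trans hUW) (by
        intro u w hw huw
        refine ⟨hanc u w hw.1 huw, ?_⟩
        rintro rfl
        exact hmin' w hw.1 huw)
    have hpaU : ∀ u, G.arrow u v → u ∈ U \ {v} := by
      intro u hu
      refine ⟨hanc u v hv hu, ?_⟩
      rintro rfl
      exact hmin' u hv hu
    rw [← Set.insert_diff_self_of_mem hv]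
    rcases hUW hv with h | h
    · exact hK.step hε φ hφ hXφ hST h hpaU (fun u hu => hS u v h hu)
    · exact (hK.symm.step hε φ hφ hXφ hST.symm h hpaU (fun u hu => hT u v h hu)).symm

end Generated

/-- Theorem 20 of Sadeghi–Soo: the joint distribution of an SCM is
Markovian to its associated directed ancestral graph. -/
theorem statement_13 {V : Type} [Fintype V] [DecidableEq V]
    {Ω : Type} [MeasurableSpace Ω] [StandardBorelSpace Ω] [Nonempty Ω]
    (μ : Measure Ω) [IsProbabilityMeasure μ]
    {𝓧 : V → Type} [∀ v, MeasurableSpace (𝓧 v)] [∀ v, StandardBorelSpace (𝓧 v)]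
    [∀ v, Nonempty (𝓧 v)]
    {E : V → Type} [∀ v, MeasurableSpace (E v)]
    (G0 : MixedGraph V) (hanc : G0.IsDirectedAncestral)
    (X : ∀ v, Ω → 𝓧 v) (ε : ∀ v, Ω → E v)
    (φ : ∀ i, (∀ k : {k : V // G0.arrow k i}, 𝓧 k) → E i → 𝓧 i)
    (hSCM : IsSCM G0 μ X ε φ) (hX : ∀ v, Measurable (X v)) :
    Markovian μ X hX G0 := by
  obtain ⟨-, hε, hφ, hXφ, hI⟩ := hSCM
  intro A B C hAB hAC hBC hsep
  obtain ⟨W, S, hW, hAW, hBW, hCW, hSW, hBS, hAS, harc, hpS, hpT⟩ :=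
    MixedGraph.decomp hanc hBC hsep
  have hST : Disjoint S (W \ S) := Set.disjoint_sdiff_right
  have hind : Indep (mm ε S) (mm ε (W \ S)) μ := by
    have := (hI S (W \ S) hST).2 (by
      rintro ⟨a, ha, b, hb, hab⟩
      exact hb.2 (harc b a ha hb.1 ((hanc.1 _ _).1 hab)))
    rw [IndepFun_iff_Indep, mm_eq, mm_eq] at this
    exact this
  obtain ⟨h1, h2, h3⟩ := KP.all (μ := μ) (hX := hX) hanc hε φ hφ hXφ hST hind hpS hpT _ W rfl
    (by intro v hv; by_cases h : v ∈ S
        · exact Or.inl h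
        · exact Or.inr ⟨hv, h⟩) hW
  simp only [Set.inter_eq_left.2 hCW] at h1 h2 h3
  unfold CI
  rw [condIndepFun_iff_condIndep]
  simp only [mm_eq]
  have hB : mm X B ≤ mm X C ⊔ mm ε S :=
    (mm_mono X (T := S ∩ W) (fun b hb => ⟨hBS hb, hBW hb⟩)).trans h2
  have hA : mm X A ≤ mm X C ⊔ mm ε (W \ S) :=
    (mm_mono X (T := (W \ S) ∩ W) (fun a ha => ⟨⟨hAW ha, Set.disjoint_left.1 hAS ha⟩, hAW ha⟩)).trans h3
  have q1 := aux_mono_left (mm_le hX _) (mm_le hε _) (mm_le hε _) h1 hB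
  exact aux_mono_left (mm_le hX _) (mm_le hε _) (mm_le hX _) q1.symm hA
end

section
/- Consider an SCM associated with a directed ancestral graph containing the arrow j → i, and write X_i = φ_i(X_{pa(i)∖{j}}, X_j, ε_i), where ε_i is independent of (X_{an(i,j)}, X_j). Suppose an(i,j) ≠ ∅ and all state spaces are standard Borel. Then X_i is conditionally independent of X_j given X_{an(i,j)} if and only if for almost all x_{an(i,j)} (w.r.t. the law of X_{an(i,j)}), the conditional law of X_i given X_{an(i,j)} = x_{an(i,j)} equals the law of φ_i(x_{pa(i)∖{j}}, x_j, ε_i) for almost all x_j in the support of the conditional distribution of X_j given X_{an(i,j)} = x_{an(i,j)}. -/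
set_option linter.unusedSectionVars false
set_option linter.unusedVariables false

open MeasureTheory ProbabilityTheory

theorem aux_iff {Ω A B C E : Type} [MeasurableSpace Ω] [StandardBorelSpace Ω] [Nonempty Ω]
    [MeasurableSpace A] [MeasurableSpace B] [StandardBorelSpace B] [Nonempty B]
    [MeasurableSpace C] [StandardBorelSpace C] [Nonempty C] [MeasurableSpace E]
    (μ : Measure Ω) [IsProbabilityMeasure μ]
    (Z : Ω → A) (Y : Ω → B) (W : Ω → C) (e : Ω → E)
    (hZ : Measurable Z) (hY : Measurable Y) (hW : Measurable W) (he : Measurable e)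
    (Φ : (A × B) × E → C) (hΦ : Measurable Φ) (hWe : ∀ ω, W ω = Φ ((Z ω, Y ω), e ω))
    (hind : IndepFun e (fun ω => (Z ω, Y ω)) μ) :
    CondIndepFun (MeasurableSpace.comap Z inferInstance) hZ.comap_le W Y μ ↔
      ∀ᵐ z ∂(μ.map Z), ∀ᵐ y ∂(condDistrib Y Z μ z),
        condDistrib W Z μ z = (μ.map e).map (fun t => Φ ((z, y), t)) := by
  have hP : Measurable (fun ω => (Z ω, Y ω)) := hZ.prodMk hY
  have : IsProbabilityMeasure (μ.map e) := Measure.isProbabilityMeasure_map he.aemeasurable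
  let κ : Kernel (A × B) C := (Kernel.id ×ₖ Kernel.const (A × B) (μ.map e)).map Φ
  have : IsMarkovKernel κ := Kernel.IsMarkovKernel.map _ hΦ
  have hκ : ∀ p, κ p = (μ.map e).map (fun t => Φ (p, t)) := by
    intro p
    simp only [κ]
    rw [Kernel.map_apply _ hΦ, Kernel.prod_apply, Kernel.id_apply, Kernel.const_apply,
      Measure.dirac_prod, Measure.map_map hΦ (by fun_prop)]
    rfl
  have hjoint : μ.map (fun ω => ((Z ω, Y ω), W ω)) = μ.map (fun ω => (Z ω, Y ω)) ⊗ₘ κ := by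
    ext S hS
    rw [Measure.compProd_apply hS, Measure.map_apply (hP.prodMk hW) hS]
    have h1 := (indepFun_iff_map_prod_eq_prod_map_map hP.aemeasurable he.aemeasurable).1 hind.symm
    have hm : Measurable (fun q : (A × B) × E => (q.1, Φ q)) := measurable_fst.prodMk hΦ
    have h2 : (fun ω => ((Z ω, Y ω), W ω)) ⁻¹' S =
        (fun ω => ((Z ω, Y ω), e ω)) ⁻¹' ((fun q : (A × B) × E => (q.1, Φ q)) ⁻¹' S) := by
      ext ω
      simp [hWe]
    rw [h2, ← Measure.map_apply (hP.prodMk he) (hm hS), h1, Measure.prod_apply (hm hS)]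
    refine lintegral_congr fun p => ?_
    rw [hκ, Measure.map_apply (by fun_prop) (measurable_prodMk_left hS)]
    rfl
  have hae := condDistrib_ae_eq_of_measure_eq_compProd (μ := μ) (fun ω => (Z ω, Y ω))
    hW.aemeasurable hjoint
  have hYZ : (μ.map Z) ⊗ₘ condDistrib Y Z μ = μ.map fun a => (Z a, Y a) :=
    compProd_map_condDistrib hY.aemeasurable
  have hci := condIndepFun_iff_condDistrib_prod_ae_eq_prodMkRight (μ := μ) hW hY hZ
  refine (⟨fun h => h.symm, fun h => h.symm⟩ : _ ↔ _).trans (hci.trans ?_)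
  constructor
  · intro h
    have h3 : ∀ᵐ p ∂(μ.map Z ⊗ₘ condDistrib Y Z μ), κ p = condDistrib W Z μ p.1 := by
      rw [hYZ]
      filter_upwards [h, hae] with p h1 h2
      rw [← h2, h1, Kernel.prodMkRight_apply]
    filter_upwards [Measure.ae_ae_of_ae_compProd h3] with z hz
    filter_upwards [hz] with y hy
    rw [← hκ, hy]
  · intro h
    rw [condDistrib_ae_eq_iff_measure_eq_compProd _ hW.aemeasurable, hjoint, ← hYZ]
    ext S hS
    rw [Measure.compProd_apply hS, Measure.compProd_apply hS,
      Measure.lintegral_compProd (Kernel.measurable_kernel_prodMk_left hS),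
      Measure.lintegral_compProd (Kernel.measurable_kernel_prodMk_left hS)]
    refine lintegral_congr_ae ?_
    filter_upwards [h] with z hz
    refine lintegral_congr_ae ?_
    filter_upwards [hz] with y hy
    rw [Kernel.prodMkRight_apply, hκ, hy]

/-- Proposition 23 of Sadeghi–Soo. -/
theorem statement_15 {V : Type} [Fintype V] [DecidableEq V]
    {Ω : Type} [MeasurableSpace Ω] [StandardBorelSpace Ω] [Nonempty Ω]
    (μ : Measure Ω) [IsProbabilityMeasure μ]
    {𝓧 : V → Type} [∀ v, MeasurableSpace (𝓧 v)] [∀ v, StandardBorelSpace (𝓧 v)]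
    [∀ v, Nonempty (𝓧 v)]
    {E : V → Type} [∀ v, MeasurableSpace (E v)]
    (G0 : MixedGraph V) (hanc : G0.IsDirectedAncestral)
    (X : ∀ v, Ω → 𝓧 v) (ε : ∀ v, Ω → E v)
    (φ : ∀ i, (∀ k : {k : V // G0.arrow k i}, 𝓧 k) → E i → 𝓧 i)
    (hSCM : IsSCM G0 μ X ε φ) (hX : ∀ v, Measurable (X v))
    (i j : V) (harr : G0.arrow j i)
    (hpa : ∀ k : V, G0.arrow k i → k ≠ j → k ∈ G0.anSet i j)
    (hindep : IndepFun (ε i)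
      (fun ω => (restrictVars X (G0.anSet i j) ω, X j ω)) μ)
    (hne : (G0.anSet i j).Nonempty) :
    ciP μ X hX i j (G0.anSet i j) ↔
      ∀ᵐ xA ∂(μ.map (restrictVars X (G0.anSet i j))),
        ∀ᵐ xj ∂(condDistrib (X j) (restrictVars X (G0.anSet i j)) μ xA),
          condDistrib (X i) (restrictVars X (G0.anSet i j)) μ xA =
            (μ.map (ε i)).map
              (fun e => φ i (combineAt G0 i j (paProj G0 i j hpa xA) xj) e) := by
  obtain ⟨-, hε, hφ, hXφ, -⟩ := hSCM
  have hR := measurable_restrictVars hX (G0.anSet i j)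
  have hcomb : Measurable (fun q : ((∀ a : G0.anSet i j, 𝓧 a) × 𝓧 j) =>
      combineAt G0 i j (paProj G0 i j hpa q.1) q.2) := by
    refine measurable_pi_lambda _ fun k => ?_
    obtain ⟨k, hk⟩ := k
    by_cases h : k = j
    · subst h
      simpa [combineAt] using measurable_snd
    · simp only [combineAt, h, dite_false, paProj]
      exact (measurable_pi_apply _).comp measurable_fst
  have hmain := aux_iff μ (restrictVars X (G0.anSet i j)) (X j) (X i) (ε i) hR (hX j) (hX i) (hε i)
    (fun q => φ i (combineAt G0 i j (paProj G0 i j hpa q.1.1) q.1.2) q.2)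
    ((hφ i).comp ((hcomb.comp measurable_fst).prodMk measurable_snd))
    (by
      intro ω
      rw [hXφ i ω]
      congr 1
      funext k
      obtain ⟨k, hk⟩ := k
      by_cases h : k = j
      · subst h
        simp [combineAt]
      · simp [combineAt, h, paProj, restrictVars])
    hindep
  refine Iff.trans ?_ hmain
  unfold ciP CI
  constructor
  · intro h
    have hm : ∀ v : V, Measurable (fun x : (∀ a : ({v} : Set V), 𝓧 a) => (x ⟨v, rfl⟩ : 𝓧 v)) :=
      fun v => measurable_pi_apply (⟨v, rfl⟩ : ({v} : Set V))
    exact h.comp (hm i) (hm j)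
  · intro h
    have hm : ∀ v : V, Measurable (fun (x : 𝓧 v) (a : ({v} : Set V)) =>
        (cast (congrArg 𝓧 (a.2 : (a : V) = v)).symm x : 𝓧 a)) := by
      intro v
      refine measurable_pi_lambda _ ?_
      rintro ⟨a, ha⟩
      obtain rfl : a = v := ha
      exact measurable_id
    have hr : ∀ v : V, restrictVars X ({v} : Set V) = (fun (x : 𝓧 v) (a : ({v} : Set V)) =>
        (cast (congrArg 𝓧 (a.2 : (a : V) = v)).symm x : 𝓧 a)) ∘ X v := by
      intro v
      funext ω a
      obtain ⟨a, ha⟩ := a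
      obtain rfl : a = v := ha
      rfl
    rw [hr i, hr j]
    exact h.comp (hm i) (hm j)
end
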